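/- arXiv:2112.14489 — 5 statements merged into one kernel-verified Lean document; each statement's English description precedes it below -/
import Mathlib

section
/- Let s₀, l, k be positive integers with l ≡ s₀k (mod 2). Define J = [s₀k/l + 2√s₀/√l, s₀k/(l−2) − 2√s₀/√(l−2)] for l > 2 (right endpoint +∞ for l ∈ {1,2}). Suppose m ≡ 1 (mod 4), n ≡ 1 (mod 4), m ≥ 4s₀, n ≥ 4s₀, and √m, √n, √r all lie in J. Then not all elements of s₀𝒪_K⁺ can be represented as a sum of squares in 𝒪_K; i.e., there exists a totally positive α ∈ 𝒪_K such that s₀α is not a sum of squares of elements of 𝒪_K. -/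
/-!
Write `g = gcd(m, n)`, `m = g m'`, `n = g n'`, `r = m' n'`, and let `x < z < y` be the numbers
`g, m', n'` in increasing order. The three radicands are `x z < x y < y z`; put `ν = √(x z)`,
`μ = √(x y)`, `ρ = √(y z)`, so that `μ ν = x ρ`, `μ ρ = y ν`, `ν ρ = z μ`. The numbers `x, y, z`
are all congruent modulo `4` to the same `ε = ± 1`.

The totally positive integer that works is `α = (a₀ + k μ) / 2`, with `μ` the root of the *middle*
radicand and `a₀` the integer with `a₀ ≡ k (mod 2)` and `k μ < a₀ < k μ + 2`. Suppose that
`s₀ α = ∑ ξᵢ²`. Every `ξᵢ` is `(a + b μ + c ν + d ρ) / 4` with integers `a ≡ b ≡ c ≡ d (mod 2)` and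
`4 ∣ a + b + c + ε d` (`exists_coords`, `integral_coords`), and comparing coefficients gives

* `∑ (a² + μ² b² + ν² c² + ρ² d²) = 8 s₀ a₀`, `∑ (a b + z c d) = 4 s₀ k`,
* `∑ (a c + y b d) = 0`, `∑ (a d + x b c) = 0`.

The conjugates of `s₀ α` under `μ ↦ -μ` are smaller than `s₀`. With the Cauchy-Schwarz inequality
and the hypothesis that the three roots lie in `J`, this forces all four sums `∑ (μ b ± ρ d)²` and
`∑ (μ b ± ν c)²` to lie strictly between `4 (l - 2) μ²` and `4 l μ²` (`window`, `signed_windows`).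
As `ρ > μ`, the first two give `|∑ b d| < 2` and `∑ (b² + d²) < 4 l`. By congruences (`parity`)
`∑ b d` is even, hence zero, and then `∑ (b² + d²)` is `4` times an integer congruent to
`s₀ k ≡ l (mod 2)`, hence at most `4 (l - 2)`. For `l ≤ 2` this gives `b = d = 0`, contradicting
`∑ (a b + z c d) = 4 s₀ k`. For `l ≥ 3`, smallness of `c ν - d ρ` forces `c = d` in every summand
(`coord_eq`), and `∑ (μ² b² + ν² c²) ≤ μ² ∑ (b² + d²) ≤ 4 (l - 2) μ²` contradicts the lower end of
the window for `∑ (μ b ± ν c)²`. This is `core`.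
-/


open Polynomial

/-- The real biquadratic field `K = ℚ(√m, √n)`, as a subfield of `ℝ`. -/
noncomputable def Kbq (m n : ℕ) : IntermediateField ℚ ℝ :=
  IntermediateField.adjoin ℚ {Real.sqrt (m : ℝ), Real.sqrt (n : ℝ)}

/-- `x` is a totally positive element of `K = ℚ(√m, √n)`: it lies in `K` and
every embedding `σ : K → ℝ` sends it to a positive real. -/
def IsTotPos (m n : ℕ) (x : ℝ) : Prop :=
  ∃ h : x ∈ Kbq m n, ∀ σ : Kbq m n →+* ℝ, 0 < σ ⟨x, h⟩

/-- `x` belongs to the ring of integers `𝒪_K` of `K = ℚ(√m, √n)`. -/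
def MemOK (m n : ℕ) (x : ℝ) : Prop :=
  x ∈ Kbq m n ∧ IsIntegral ℤ x

/-- `γ` is a sum of squares of elements of `𝒪_K`. -/
def IsSumSqOK (m n : ℕ) (γ : ℝ) : Prop :=
  ∃ (t : ℕ) (x : Fin t → ℝ), (∀ i, MemOK m n (x i)) ∧ γ = ∑ i, (x i) ^ 2

/-- The interval `I₁ = [2s₀k/l + 2√s₀/√l, 2s₀k/(l−1) − 2√s₀/√(l−1)]`
(right endpoint `+∞` when `l = 1`). -/
noncomputable def I1 (s k l : ℕ) : Set ℝ :=
  if l = 1 then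
    Set.Ici (2 * (s : ℝ) * (k : ℝ) / (l : ℝ) + 2 * Real.sqrt (s : ℝ) / Real.sqrt (l : ℝ))
  else
    Set.Icc (2 * (s : ℝ) * (k : ℝ) / (l : ℝ) + 2 * Real.sqrt (s : ℝ) / Real.sqrt (l : ℝ))
      (2 * (s : ℝ) * (k : ℝ) / ((l : ℝ) - 1) - 2 * Real.sqrt (s : ℝ) / Real.sqrt ((l : ℝ) - 1))

/-- The interval `I₂ = [s₀k/(2l) + √s₀/√l, s₀k/(2(l−1)) − √s₀/√(l−1)]`
(right endpoint `+∞` when `l = 1`). -/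
noncomputable def I2 (s k l : ℕ) : Set ℝ :=
  if l = 1 then
    Set.Ici ((s : ℝ) * (k : ℝ) / (2 * (l : ℝ)) + Real.sqrt (s : ℝ) / Real.sqrt (l : ℝ))
  else
    Set.Icc ((s : ℝ) * (k : ℝ) / (2 * (l : ℝ)) + Real.sqrt (s : ℝ) / Real.sqrt (l : ℝ))
      ((s : ℝ) * (k : ℝ) / (2 * ((l : ℝ) - 1)) - Real.sqrt (s : ℝ) / Real.sqrt ((l : ℝ) - 1))

/-- The interval `J = [s₀k/l + 2√s₀/√l, s₀k/(l−2) − 2√s₀/√(l−2)]`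
(right endpoint `+∞` when `l ∈ {1, 2}`). -/
noncomputable def Jset (s k l : ℕ) : Set ℝ :=
  if l ≤ 2 then
    Set.Ici ((s : ℝ) * (k : ℝ) / (l : ℝ) + 2 * Real.sqrt (s : ℝ) / Real.sqrt (l : ℝ))
  else
    Set.Icc ((s : ℝ) * (k : ℝ) / (l : ℝ) + 2 * Real.sqrt (s : ℝ) / Real.sqrt (l : ℝ))
      ((s : ℝ) * (k : ℝ) / ((l : ℝ) - 2) - 2 * Real.sqrt (s : ℝ) / Real.sqrt ((l : ℝ) - 2))

/-! ### Congruences and size estimates for the coordinates -/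

/-- The congruence input in the case `x ≡ y ≡ z ≡ 1 (mod 4)`: the integrality conditions on the
coordinates together with the coefficient equations determine `∑ (b + d)² / 4` modulo `2`, and force
`∑ b d` to be even. -/
lemma parity {ι : Type*} [Fintype ι] (a b c d : ι → ℤ) (x y z K : ℤ)
    (hx : 4 ∣ x - 1) (hy : 4 ∣ y - 1) (hz : 4 ∣ z - 1)
    (hbc : ∀ i, 2 ∣ b i - c i) (hdc : ∀ i, 2 ∣ d i - c i)
    (h4 : ∀ i, 4 ∣ a i + b i + c i + d i)
    (E2 : ∑ i, (a i * b i + z * (c i * d i)) = 4 * K)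
    (E3 : ∑ i, (a i * c i + y * (b i * d i)) = 0)
    (E4 : ∑ i, (a i * d i + x * (b i * c i)) = 0) :
    ∃ T, ∑ i, (b i + d i) ^ 2 = 4 * T ∧ 2 ∣ T - K ∧ 2 ∣ ∑ i, b i * d i := by
  obtain ⟨u, hu⟩ := hx
  obtain ⟨v, hv⟩ := hy
  obtain ⟨w, hw⟩ := hz
  obtain rfl : x = 1 + 4 * u := by linarith
  obtain rfl : y = 1 + 4 * v := by linarith
  obtain rfl : z = 1 + 4 * w := by linarith
  choose β hβ using hbc
  choose δ hδ using hdc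
  choose t ht using h4
  have hb : ∀ i, b i = c i + 2 * β i := fun i => by linarith [hβ i]
  have hd : ∀ i, d i = c i + 2 * δ i := fun i => by linarith [hδ i]
  have ha : ∀ i, a i = 4 * t i - 3 * c i - 2 * β i - 2 * δ i := fun i => by
    linarith [ht i, hb i, hd i]
  simp only [ha, hb, hd] at *
  have hC : ∑ i, c i ^ 2 = 2 * ∑ i, (β i * δ i + t i * c i
      + v * ((c i + 2 * β i) * (c i + 2 * δ i))) := by
    have h : 2 * ∑ i, c i ^ 2 - 4 * ∑ i, (β i * δ i + t i * c i
      + v * ((c i + 2 * β i) * (c i + 2 * δ i))) = 0 := by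
      rw [← neg_eq_zero, ← E3, Finset.mul_sum, Finset.mul_sum, ← Finset.sum_sub_distrib,
        ← Finset.sum_neg_distrib]
      refine Finset.sum_congr rfl fun i _ => by ring
    linarith
  have hBD : ∑ i, (c i + 2 * β i) * (c i + 2 * δ i)
      = ∑ i, c i ^ 2 + 2 * ∑ i, (β i * c i + δ i * c i + 2 * (β i * δ i)) := by
    rw [Finset.mul_sum, ← Finset.sum_add_distrib]
    refine Finset.sum_congr rfl fun i _ => by ring
  refine ⟨∑ i, (c i + β i + δ i) ^ 2, ?_, ?_, ?_⟩
  · rw [Finset.mul_sum]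
    refine Finset.sum_congr rfl fun i _ => by ring
  · have h : 4 * K = 4 * (2 * ∑ i, ((c i + β i + δ i) * t i + w * (c i * δ i) + u * (c i * β i))
        - ∑ i, (c i + β i + δ i) ^ 2 + (u + w) * ∑ i, c i ^ 2) := by
      rw [← E2, ← add_zero (∑ i, _), ← E4]
      simp only [Finset.mul_sum, ← Finset.sum_sub_distrib, ← Finset.sum_add_distrib]
      refine Finset.sum_congr rfl fun i _ => by ring
    rw [hC] at h
    have h' := mul_left_cancel₀ (by norm_num) h
    rw [h']
    refine ⟨∑ i, (c i + β i + δ i) ^ 2 - ∑ i, ((c i + β i + δ i) * t i + w * (c i * δ i)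
      + u * (c i * β i)) - (u + w) * ∑ i, (β i * δ i + t i * c i
      + v * ((c i + 2 * β i) * (c i + 2 * δ i))), by ring⟩
  · rw [hBD, hC, ← mul_add]
    exact dvd_mul_right _ _

/-- If `∑ p q` is prescribed and `p` is close to `q`, then `∑ q²` is close to `∑ p q`. Applied with
`L = √l` and `L = √(l - 2)`, the two hypotheses on `L` are exactly that `μ` lies to the right of the
left endpoint, resp. to the left of the right endpoint, of the interval `J`. -/
lemma window {ι : Type*} [Fintype ι] (p q : ι → ℝ) (K μ σ : ℝ) (hK : 0 < K) (hμ : 0 < μ)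
    (hσ : 0 < σ)
    (h1 : ∑ i, p i * q i = 4 * K * μ) (h2 : ∑ i, (p i - q i) ^ 2 < 16 * σ ^ 2) :
    (∀ L : ℝ, 0 < L → K + 2 * σ * L ≤ L ^ 2 * μ → ∑ i, q i ^ 2 < 4 * L ^ 2 * μ ^ 2) ∧
    (∀ L : ℝ, 0 < L → L ^ 2 * μ ≤ K - 2 * σ * L → 4 * L ^ 2 * μ ^ 2 < ∑ i, q i ^ 2) := by
  obtain ⟨w, hw⟩ : ∃ w, w = √(∑ i, q i ^ 2) := ⟨_, rfl⟩
  have hQ0 : 0 ≤ ∑ i, q i ^ 2 := Finset.sum_nonneg fun i _ => sq_nonneg _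
  have hwQ : w ^ 2 = ∑ i, q i ^ 2 := by rw [hw, Real.sq_sqrt hQ0]
  have hw0 : 0 ≤ w := hw ▸ Real.sqrt_nonneg _
  have hcs := Finset.sum_mul_sq_le_sq_mul_sq Finset.univ (fun i => p i - q i) q
  have hdiff : ∑ i, (p i - q i) * q i = 4 * K * μ - w ^ 2 := by
    rw [hwQ, ← h1, ← Finset.sum_sub_distrib]
    exact Finset.sum_congr rfl fun i _ => by ring
  rw [hdiff, ← hwQ] at hcs
  have hKμ : 0 < K * μ := mul_pos hK hμ
  have hwpos : 0 < w := by
    rcases hw0.eq_or_lt with h | h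
    · rw [← h] at hcs
      nlinarith
    · exact h
  have hlt : (4 * K * μ - w ^ 2) ^ 2 < (4 * σ * w) ^ 2 := by
    have : 0 < w ^ 2 := by positivity
    nlinarith
  have habs := abs_lt.1 (abs_lt_of_sq_lt_sq hlt (by positivity))
  rw [← hwQ]
  constructor
  · intro L hL h
    by_contra! hc
    have hc' : 2 * L * μ ≤ w := by
      apply le_of_sq_le_sq _ hw0
      nlinarith
    have h4 : 4 * σ ≤ 2 * L * μ := by
      have : L * (2 * σ) ≤ L * (L * μ) := by nlinarith
      have := le_of_mul_le_mul_left this hL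
      linarith
    nlinarith [mul_le_mul hc' (sub_le_sub_right hc' (4 * σ)) (by linarith) hw0,
      mul_le_mul_of_nonneg_left h hμ.le]
  · intro L hL h
    by_contra! hc
    have hc' : w ≤ 2 * L * μ := by
      apply le_of_sq_le_sq _ (by positivity)
      nlinarith
    nlinarith [mul_le_mul_of_nonneg_left hc' hσ.le, mul_le_mul_of_nonneg_left h hμ.le]

/-- The hypotheses of `window` hold for `p = a + ε ν c`, `q = μ b + ε ρ d` with `ε = ± 1`: here
`p + q` and `p - q` are four times conjugates of the `ξᵢ`. -/
lemma signed_windows {ι : Type*} [Fintype ι] (a b c d : ι → ℝ) (x y z μ ν ρ σ K G ε : ℝ)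
    (hμν : μ * ν = x * ρ) (hμρ : μ * ρ = y * ν) (hνρ : ν * ρ = z * μ)
    (hε : ε ^ 2 = 1)
    (hG : ∑ i, (a i ^ 2 + μ ^ 2 * b i ^ 2 + ν ^ 2 * c i ^ 2 + ρ ^ 2 * d i ^ 2) = G)
    (hG' : G - 8 * K * μ < 16 * σ ^ 2)
    (E2 : ∑ i, (a i * b i + z * (c i * d i)) = 4 * K)
    (E3 : ∑ i, (a i * c i + y * (b i * d i)) = 0)
    (E4 : ∑ i, (a i * d i + x * (b i * c i)) = 0) :
    ∑ i, (a i + ε * ν * c i) * (μ * b i + ε * ρ * d i) = 4 * K * μ ∧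
    ∑ i, ((a i + ε * ν * c i) - (μ * b i + ε * ρ * d i)) ^ 2 < 16 * σ ^ 2 := by
  constructor
  · have : 4 * K * μ = μ * ∑ i, (a i * b i + z * (c i * d i))
        + ε * ρ * ∑ i, (a i * d i + x * (b i * c i)) := by rw [E2, E4]; ring
    rw [this, Finset.mul_sum, Finset.mul_sum, ← Finset.sum_add_distrib]
    refine Finset.sum_congr rfl fun i _ => ?_
    linear_combination (ε * c i * b i) * hμν + ε ^ 2 * c i * d i * hνρ + z * μ * c i * d i * hε
  · refine lt_of_eq_of_lt ?_ hG'
    have : G - 8 * K * μ = G - 2 * μ * ∑ i, (a i * b i + z * (c i * d i))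
        + 2 * ε * ν * ∑ i, (a i * c i + y * (b i * d i))
        - 2 * ε * ρ * ∑ i, (a i * d i + x * (b i * c i)) := by rw [E2, E3, E4]; ring
    rw [this, ← hG, Finset.mul_sum, Finset.mul_sum, Finset.mul_sum, ← Finset.sum_sub_distrib,
      ← Finset.sum_add_distrib, ← Finset.sum_sub_distrib]
    refine Finset.sum_congr rfl fun i _ => ?_
    linear_combination (ν ^ 2 * c i ^ 2 + ρ ^ 2 * d i ^ 2 - 2 * z * μ * c i * d i) * hε
      + 2 * ε * b i * d i * hμρ - 2 * ε * b i * c i * hμν - 2 * ε ^ 2 * c i * d i * hνρ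

/-- Since `c ν - d ρ` is small and `ν`, `ρ` both lie in `J`, the integers `c ≡ d (mod 2)` are equal
unless `d` is large. The last alternative treats the one case `l = 3`, `d = ± 2` that the bound
`|d| ≤ l - 2` does not cover. -/
lemma coord_eq (c d : ℤ) (l : ℝ) (ν ρ σ S : ℝ) (hσ : 0 < σ) (hνρ : ν < ρ) (hl : 2 < l)
    (hS : 2 ≤ S) (hν : S * σ ≤ ν)
    (hJ : (l - 2) * ρ + 2 * S * σ ≤ l * ν)
    (hpar : 2 ∣ d - c) (hη : (c * ν - d * ρ) ^ 2 < 16 * σ ^ 2)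
    (hd : |(d : ℝ)| ≤ l - 2 ∨ ((d : ℝ) ^ 2 = 4 ∧ l = 3 ∧ |c| ≠ 4)) : c = d := by
  wlog hd0 : 0 ≤ d generalizing c d
  · have := this (-c) (-d) (by obtain ⟨e, he⟩ := hpar; exact ⟨-e, by linarith⟩)
      (by push_cast; nlinarith) (by push_cast; simpa using hd) (by omega)
    omega
  by_contra hne
  have hSσ : 2 * σ ≤ S * σ := by nlinarith
  have hη' := abs_lt.1 (abs_lt_of_sq_lt_sq (a := c * ν - d * ρ) (b := 4 * σ) (by nlinarith)
    (by positivity))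
  have hd0' : (0 : ℝ) ≤ d := by exact_mod_cast hd0
  rcases lt_or_gt_of_ne hne with h | h
  · have h2 : (c : ℝ) + 2 ≤ d := by
      have : c + 2 ≤ d := by omega
      exact_mod_cast this
    nlinarith [mul_le_mul_of_nonneg_left hνρ.le hd0',
      mul_le_mul_of_nonneg_right h2 (by nlinarith : 0 ≤ ν)]
  · have h2 : (d : ℝ) + 2 ≤ c := by
      have : d + 2 ≤ c := by omega
      exact_mod_cast this
    have hν0 : 0 ≤ ν := by nlinarith
    rcases hd with hd | ⟨hd, rfl, hc⟩
    · rw [abs_of_nonneg hd0'] at hd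
      have hcν := mul_le_mul_of_nonneg_right h2 hν0
      have key : (l - 2) * (4 * σ) ≤ (l - 2) * (c * ν - d * ρ) := by
        nlinarith [mul_le_mul_of_nonneg_left hJ hd0',
          mul_le_mul_of_nonneg_left hν (sub_nonneg.2 hd),
          mul_le_mul_of_nonneg_left hcν (by linarith : 0 ≤ l - 2),
          mul_le_mul_of_nonneg_left hSσ (by linarith : 0 ≤ l - 2)]
      have := le_of_mul_le_mul_left key (by linarith)
      linarith
    · have hd2 : d = 2 := by
        have : d ^ 2 = 4 := by exact_mod_cast hd
        nlinarith
      subst hd2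
      have hc6 : 6 ≤ c := by
        rw [abs_of_nonneg (by omega)] at hc
        omega
      have hc6' : (6 : ℝ) ≤ c := by exact_mod_cast hc6
      push_cast at *
      nlinarith [mul_le_mul_of_nonneg_right hc6' hν0]

set_option maxHeartbeats 1000000 in
/-- The contradiction extracted from a representation as a sum of squares, in terms of coordinates:
`σ` and `Λ` stand for `√s` and `√l`, and `G` for `8 s a₀`, so that `hG'` says `a₀ - k μ < 2`. -/
lemma core {ι : Type*} [Fintype ι] (a b c d : ι → ℤ) (x y z s l k : ℕ)
    (μ ν ρ σ Λ G : ℝ)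
    (hμ : 0 < μ) (hνμ : ν < μ) (hμρ' : μ < ρ) (hσ : 0 < σ) (hΛ : 0 < Λ)
    (hμν : μ * ν = x * ρ) (hμρ : μ * ρ = y * ν) (hνρ : ν * ρ = z * μ)
    (hΛ2 : Λ ^ 2 = l) (hs : 0 < s) (hk : 0 < k) (hl : 0 < l) (hpar : l % 2 = (s * k) % 2)
    (hlow : s * k + 2 * σ * Λ ≤ l * ν)
    (hup : 3 ≤ l → (l - 2) * ρ ≤ s * k - 2 * σ * √((l : ℝ) - 2))
    (hG : ∑ i, ((a i : ℝ) ^ 2 + μ ^ 2 * (b i : ℝ) ^ 2 + ν ^ 2 * (c i : ℝ) ^ 2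
      + ρ ^ 2 * (d i : ℝ) ^ 2) = G)
    (hG' : G - 8 * (s * k) * μ < 16 * σ ^ 2)
    (hdc : ∀ i, 2 ∣ d i - c i)
    (E2 : ∑ i, (a i * b i + z * (c i * d i)) = 4 * (s * k))
    (E3 : ∑ i, (a i * c i + y * (b i * d i)) = 0)
    (E4 : ∑ i, (a i * d i + x * (b i * c i)) = 0)
    (hT : ∃ T : ℤ, ∑ i, (b i + d i) ^ 2 = 4 * T ∧ 2 ∣ T - s * k ∧ 2 ∣ ∑ i, b i * d i) :
    False := by
  have E2r : ∑ i, ((a i : ℝ) * b i + z * (c i * d i)) = 4 * (s * k) := by exact_mod_cast E2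
  have E3r : ∑ i, ((a i : ℝ) * c i + y * (b i * d i)) = 0 := by exact_mod_cast E3
  have E4r : ∑ i, ((a i : ℝ) * d i + x * (b i * c i)) = 0 := by exact_mod_cast E4
  have hK : (0 : ℝ) < s * k := by positivity
  have hl0 : (0 : ℝ) < l := by exact_mod_cast hl
  have hν : 0 < ν := by
    have : 0 < l * ν := by nlinarith [mul_pos hσ hΛ]
    exact pos_of_mul_pos_right this hl0.le
  -- the windows attached to `(a ± ν c, μ b ± ρ d)` and to `(a ± ρ d, μ b ± ν c)`
  have wr : ∀ ε : ℝ, ε ^ 2 = 1 → _ := fun ε hε => signed_windows (fun i => (a i : ℝ))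
    (fun i => (b i : ℝ)) (fun i => (c i : ℝ)) (fun i => (d i : ℝ)) x y z μ ν ρ σ (s * k) G ε
    hμν hμρ hνρ hε hG hG' E2r E3r E4r
  have wn : ∀ ε : ℝ, ε ^ 2 = 1 → _ := fun ε hε => signed_windows (fun i => (a i : ℝ))
    (fun i => (b i : ℝ)) (fun i => (d i : ℝ)) (fun i => (c i : ℝ)) y x z μ ρ ν σ (s * k) G ε
    hμρ hμν (by linarith) hε (by rw [← hG]; exact Finset.sum_congr rfl fun i _ => by ring) hG'
    (by rw [← E2r]; exact Finset.sum_congr rfl fun i _ => by ring) E4r E3r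
  have hlowμ : s * k + 2 * σ * Λ ≤ Λ ^ 2 * μ := by
    rw [hΛ2]; nlinarith
  obtain ⟨B, hB⟩ : ∃ B, B = ∑ i, b i ^ 2 := ⟨_, rfl⟩
  obtain ⟨C, hC⟩ : ∃ C, C = ∑ i, c i ^ 2 := ⟨_, rfl⟩
  obtain ⟨D, hD⟩ : ∃ D, D = ∑ i, d i ^ 2 := ⟨_, rfl⟩
  obtain ⟨Y, hY⟩ : ∃ Y, Y = ∑ i, b i * d i := ⟨_, rfl⟩
  obtain ⟨X, hX⟩ : ∃ X, X = ∑ i, b i * c i := ⟨_, rfl⟩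
  have qr : ∀ ε : ℝ, ε ^ 2 = 1 → ∑ i, (μ * (b i : ℝ) + ε * ρ * d i) ^ 2
      = μ ^ 2 * B + ρ ^ 2 * D + 2 * ε * μ * ρ * Y := fun ε hε => by
    rw [hB, hD, hY]
    push_cast
    simp only [Finset.mul_sum, ← Finset.sum_add_distrib]
    exact Finset.sum_congr rfl fun i _ => by linear_combination ρ ^ 2 * (d i : ℝ) ^ 2 * hε
  have qn : ∀ ε : ℝ, ε ^ 2 = 1 → ∑ i, (μ * (b i : ℝ) + ε * ν * c i) ^ 2
      = μ ^ 2 * B + ν ^ 2 * C + 2 * ε * μ * ν * X := fun ε hε => by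
    rw [hB, hC, hX]
    push_cast
    simp only [Finset.mul_sum, ← Finset.sum_add_distrib]
    exact Finset.sum_congr rfl fun i _ => by linear_combination ν ^ 2 * (c i : ℝ) ^ 2 * hε
  have win_r : ∀ ε : ℝ, ε ^ 2 = 1 → _ := fun ε hε =>
    window _ _ (s * k) μ σ hK hμ hσ (wr ε hε).1 (wr ε hε).2
  have win_n : ∀ ε : ℝ, ε ^ 2 = 1 → _ := fun ε hε =>
    window _ _ (s * k) μ σ hK hμ hσ (wn ε hε).1 (wn ε hε).2
  have hp : (1 : ℝ) ^ 2 = 1 := by norm_num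
  have hm : (-1 : ℝ) ^ 2 = 1 := by norm_num
  have up1 := (win_r 1 hp).1 Λ hΛ hlowμ
  have up2 := (win_r (-1) hm).1 Λ hΛ hlowμ
  rw [qr 1 hp, hΛ2] at up1
  rw [qr (-1) hm, hΛ2] at up2
  have hB0 : 0 ≤ B := hB ▸ Finset.sum_nonneg fun i _ => sq_nonneg _
  have hD0 : 0 ≤ D := hD ▸ Finset.sum_nonneg fun i _ => sq_nonneg _
  have hB0r : (0 : ℝ) ≤ B := by exact_mod_cast hB0
  have hD0r : (0 : ℝ) ≤ D := by exact_mod_cast hD0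
  have hm2 : 0 < μ ^ 2 := by positivity
  have hρD : μ ^ 2 * (D : ℝ) ≤ ρ ^ 2 * D := by gcongr
  have hBD : B + D < 4 * l := by
    have : μ ^ 2 * (B + D : ℝ) < μ ^ 2 * (4 * l) := by linarith
    have := lt_of_mul_lt_mul_left this hm2.le
    exact_mod_cast this
  obtain ⟨T, hT1, hT2, hT3⟩ := hT
  have hT1' : B + D + 2 * Y = 4 * T := by
    rw [← hT1, hB, hD, hY, Finset.mul_sum, ← Finset.sum_add_distrib, ← Finset.sum_add_distrib]
    exact Finset.sum_congr rfl fun i _ => by ring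
  rw [← hY] at hT3
  have hparZ : (2 : ℤ) ∣ l - s * k := by
    have : ((l : ℤ) - s * k) = ((l : ℤ) - ((s * k : ℕ) : ℤ)) := by push_cast; ring
    omega
  -- the lower ends of the windows
  have low : 3 ≤ l → ∀ ε : ℝ, ε ^ 2 = 1 →
      4 * ((l : ℝ) - 2) * μ ^ 2 < μ ^ 2 * B + ρ ^ 2 * D + 2 * ε * μ * ρ * Y ∧
      4 * ((l : ℝ) - 2) * μ ^ 2 < μ ^ 2 * B + ν ^ 2 * C + 2 * ε * μ * ν * X := by
    intro hl3 ε hε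
    have hl3' : (3 : ℝ) ≤ l := by exact_mod_cast hl3
    have hpos : (0 : ℝ) < l - 2 := by linarith
    have hsq : √((l : ℝ) - 2) ^ 2 = l - 2 := Real.sq_sqrt hpos.le
    have hupμ : √((l : ℝ) - 2) ^ 2 * μ ≤ s * k - 2 * σ * √((l : ℝ) - 2) := by
      rw [hsq]; nlinarith [hup hl3]
    have h1 := (win_r ε hε).2 _ (Real.sqrt_pos.2 hpos) hupμ
    have h2 := (win_n ε hε).2 _ (Real.sqrt_pos.2 hpos) hupμ
    rw [qr ε hε, hsq] at h1
    rw [qn ε hε, hsq] at h2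
    exact ⟨h1, h2⟩
  have hYabs : |(Y : ℝ)| < 2 := by
    have h8 : 4 * μ * ρ * |(Y : ℝ)| < 8 * μ ^ 2 := by
      rcases le_or_gt l 2 with h2 | h3
      · have h2' : (l : ℝ) ≤ 2 := by exact_mod_cast h2
        have q1 : 0 ≤ μ ^ 2 * B + ρ ^ 2 * D + 2 * 1 * μ * ρ * Y := by
          rw [← qr 1 hp]; exact Finset.sum_nonneg fun i _ => sq_nonneg _
        have q2 : 0 ≤ μ ^ 2 * B + ρ ^ 2 * D + 2 * (-1) * μ * ρ * Y := by
          rw [← qr (-1) hm]; exact Finset.sum_nonneg fun i _ => sq_nonneg _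
        have q3 : 4 * l * μ ^ 2 ≤ 4 * 2 * μ ^ 2 := by gcongr
        rcases abs_cases (Y : ℝ) with ⟨h, -⟩ | ⟨h, -⟩ <;> rw [h] <;> linarith
      · have q1 := (low h3 1 hp).1
        have q2 := (low h3 (-1) hm).1
        rcases abs_cases (Y : ℝ) with ⟨h, -⟩ | ⟨h, -⟩ <;> rw [h] <;> linarith
    have h9 : (4 * μ ^ 2) * |(Y : ℝ)| < (4 * μ ^ 2) * 2 := by
      have : 4 * μ * μ * |(Y : ℝ)| ≤ 4 * μ * ρ * |(Y : ℝ)| := by gcongr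
      linarith
    exact lt_of_mul_lt_mul_left h9 (by positivity)
  have hY0 : Y = 0 := by
    have h := abs_lt.1 hYabs
    have h1 : (-2 : ℤ) < Y := by exact_mod_cast h.1
    have h2 : Y < 2 := by exact_mod_cast h.2
    omega
  have hTl : B + D ≤ 4 * (l - 2) := by omega
  have hl3 : 3 ≤ l := by
    by_contra! hlt
    have hB00 : B = 0 := by omega
    have hD00 : D = 0 := by omega
    have hb0 : ∀ i, b i = 0 := fun i => by
      have := (Finset.sum_eq_zero_iff_of_nonneg (fun i _ => sq_nonneg (b i))).1 (hB ▸ hB00) i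
        (Finset.mem_univ i)
      exact pow_eq_zero_iff (two_ne_zero) |>.1 this
    have hd0 : ∀ i, d i = 0 := fun i => by
      have := (Finset.sum_eq_zero_iff_of_nonneg (fun i _ => sq_nonneg (d i))).1 (hD ▸ hD00) i
        (Finset.mem_univ i)
      exact pow_eq_zero_iff (two_ne_zero) |>.1 this
    simp only [hb0, hd0, mul_zero, add_zero, Finset.sum_const_zero] at E2
    have : (0 : ℤ) < s * k := by positivity
    omega
  have hl3' : (3 : ℝ) ≤ l := by exact_mod_cast hl3
  have hup' := hup hl3
  obtain ⟨S', hS'⟩ : ∃ S', S' = √((l : ℝ) - 2) := ⟨_, rfl⟩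
  have hS'1 : 1 ≤ S' := by
    rw [hS', Real.one_le_sqrt]; linarith
  have hΛ1 : 1 ≤ Λ := by
    by_contra! h
    have : Λ ^ 2 < 1 := by nlinarith only [h, hΛ]
    linarith
  rw [← hS'] at hup'
  have hJ : ((l : ℝ) - 2) * ρ + 2 * (Λ + S') * σ ≤ l * ν := by linarith
  have hνS : (Λ + S') * σ ≤ ν := by
    have : ((l : ℝ) - 2) * ν ≤ (l - 2) * ρ :=
      mul_le_mul_of_nonneg_left (by linarith) (by linarith)
    linarith
  have hη : ∀ i, ((c i : ℝ) * ν - d i * ρ) ^ 2 < 16 * σ ^ 2 := fun i => by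
    have h1 := (wr 1 hp).2
    have h2 := (wr (-1) hm).2
    have h3 : ∑ i, ((c i : ℝ) * ν - d i * ρ) ^ 2 < 16 * σ ^ 2 := by
      have : 2 * ∑ i, ((c i : ℝ) * ν - d i * ρ) ^ 2 ≤
          ∑ i, ((a i + 1 * ν * c i) - (μ * b i + 1 * ρ * d i)) ^ 2
          + ∑ i, ((a i + (-1) * ν * c i) - (μ * b i + (-1) * ρ * d i)) ^ 2 := by
        rw [Finset.mul_sum, ← Finset.sum_add_distrib]
        refine Finset.sum_le_sum fun i _ => ?_
        nlinarith [sq_nonneg ((a i : ℝ) - μ * b i)]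
      linarith
    exact lt_of_le_of_lt (Finset.single_le_sum
      (f := fun i => ((c i : ℝ) * ν - d i * ρ) ^ 2) (fun i _ => sq_nonneg _)
      (Finset.mem_univ i)) h3
  have hcd : ∀ i, c i = d i := fun i => by
    refine coord_eq (c i) (d i) l ν ρ σ (Λ + S') hσ (by linarith) (by linarith) (by linarith)
      hνS hJ (hdc i) (hη i) ?_
    have hdi : d i ^ 2 ≤ D := hD ▸ Finset.single_le_sum
      (f := fun i => d i ^ 2) (fun i _ => sq_nonneg _) (Finset.mem_univ i)
    rcases le_or_gt (|d i|) ((l : ℤ) - 2) with h | h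
    · left
      have : ((|d i| : ℤ) : ℝ) ≤ (((l : ℤ) - 2 : ℤ) : ℝ) := by exact_mod_cast h
      push_cast at this
      exact this
    · right
      have hsq : |d i| ^ 2 = d i ^ 2 := sq_abs _
      have hl' : l = 3 := by
        have : ((l : ℤ) - 3) ^ 2 ≤ 0 := by nlinarith
        have : (l : ℤ) - 3 = 0 := by nlinarith
        omega
      subst hl'
      have hd2 : |d i| = 2 := by
        push_cast at *
        nlinarith
      rw [hd2] at hsq
      refine ⟨by exact_mod_cast hsq.symm, by norm_num, fun hc4 => ?_⟩
      -- here `b = 0` and `d` is supported at `i`, so `z c_i d_i = 4 s k` with `s k` odd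
      have hB00 : B = 0 := by push_cast at *; omega
      have hb0 : ∀ i, b i = 0 := fun i => by
        have := (Finset.sum_eq_zero_iff_of_nonneg (fun i _ => sq_nonneg (b i))).1 (hB ▸ hB00) i
          (Finset.mem_univ i)
        exact pow_eq_zero_iff (two_ne_zero) |>.1 this
      have hdj : ∀ j, j ≠ i → d j = 0 := fun j hj => by
        classical
        have h2 := Finset.sum_le_sum_of_subset_of_nonneg (f := fun i => d i ^ 2)
          (Finset.subset_univ {i, j}) (fun i _ _ => sq_nonneg (d i))
        rw [Finset.sum_pair hj.symm, ← hD] at h2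
        have : d j ^ 2 ≤ 0 := by push_cast at *; omega
        nlinarith
      have hE : (z : ℤ) * (c i * d i) = 4 * (s * k) := by
        rw [← E2]
        rw [Finset.sum_eq_single i]
        · rw [hb0]; ring
        · intro j _ hj
          rw [hb0, hdj j hj]; ring
        · simp
      have hcd8 : |c i * d i| = 8 := by rw [abs_mul, hc4, hd2]; norm_num
      have h8 : (8 : ℤ) ∣ 4 * (s * k) := by
        rw [← hE]
        refine Dvd.dvd.mul_left ?_ _
        rw [← hcd8]
        exact (abs_dvd _ _).2 dvd_rfl
      push_cast at *
      omega
  have hCD : C = D := by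
    rw [hC, hD]; exact Finset.sum_congr rfl fun i _ => by rw [hcd i]
  have l1 := (low hl3 1 hp).2
  have l2 := (low hl3 (-1) hm).2
  have hTlr : (B : ℝ) + D ≤ 4 * (l - 2) := by exact_mod_cast hTl
  rw [hCD] at l1 l2
  have hνD : ν ^ 2 * (D : ℝ) ≤ μ ^ 2 * D := by gcongr
  have := mul_le_mul_of_nonneg_left hTlr hm2.le
  linarith

/-! ### Coordinates of the integers of a biquadratic field -/

lemma irr_zero {μ : ℝ} (hμ : Irrational μ) {p q : ℚ} (h : (p : ℝ) + q * μ = 0) :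
    p = 0 ∧ q = 0 := by
  have hq : q = 0 := by
    by_contra hq
    have hq' : (q : ℝ) ≠ 0 := by exact_mod_cast hq
    refine hμ ⟨-p / q, ?_⟩
    push_cast
    field_simp
    linarith
  subst hq
  refine ⟨?_, rfl⟩
  simpa using h

/-- The numbers `1, μ, ν, ρ` are linearly independent over `ℚ`: a relation that involves `ν` or `ρ`
gives `ν ∈ ℚ(μ)`, since `ρ = μ ν / x`, and squaring shows that `ν` or `ρ` is rational. -/
lemma lin_indep {x m n μ ν ρ : ℝ} {xq mq nq : ℚ} (hx : (xq : ℝ) = x) (hmq : (mq : ℝ) = m)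
    (hnq : (nq : ℝ) = n)
    (hx0 : x ≠ 0) (hμ2 : μ ^ 2 = m) (hν2 : ν ^ 2 = n) (hμν : μ * ν = x * ρ)
    (hμ : Irrational μ) (hν : Irrational ν) (hρ : Irrational ρ) {p q s t : ℚ}
    (h : (p : ℝ) + q * μ + s * ν + t * ρ = 0) : p = 0 ∧ q = 0 ∧ s = 0 ∧ t = 0 := by
  subst hx hmq hnq
  by_cases hst : xq * s = 0 ∧ t = 0
  · obtain ⟨hs, ht⟩ := hst
    have hs : s = 0 := by
      rcases mul_eq_zero.1 hs with h | h
      · exact absurd (by simp [h]) hx0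
      · exact h
    subst hs ht
    have := irr_zero hμ (p := p) (q := q) (by simpa using h)
    exact ⟨this.1, this.2, rfl, rfl⟩
  exfalso
  have hN : ((xq * s) ^ 2 - t ^ 2 * mq : ℝ) ≠ 0 := by
    intro hN
    have h0 : ((xq * s : ℝ) + t * μ) * (xq * s - t * μ) = 0 := by
      rw [← hN, ← hμ2]; ring
    rcases mul_eq_zero.1 h0 with h1 | h1
    · exact hst (irr_zero hμ (p := xq * s) (q := t) (by push_cast; exact h1))
    · have := irr_zero hμ (p := xq * s) (q := -t) (by push_cast; linarith)
      exact hst ⟨this.1, by simpa using this.2⟩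
  obtain ⟨A, B, hAB⟩ : ∃ A B : ℚ, ν = A + B * μ := by
    refine ⟨-(xq * p * (xq * s) - xq * q * t * mq) / ((xq * s) ^ 2 - t ^ 2 * mq),
      -(xq * q * (xq * s) - xq * p * t) / ((xq * s) ^ 2 - t ^ 2 * mq), ?_⟩
    push_cast
    rw [div_mul_eq_mul_div, ← add_div, eq_div_iff hN]
    linear_combination (xq * (xq * s - t * μ)) * h + (xq * s - t * μ) * t * hμν
      + (ν * t ^ 2 + xq * q * t) * hμ2
  have hsq : ((A ^ 2 + B ^ 2 * mq - nq : ℚ) : ℝ) + ((2 * A * B : ℚ) : ℝ) * μ = 0 := by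
    push_cast
    rw [← hμ2, ← hν2, hAB]; ring
  have hAB0 := (irr_zero hμ hsq).2
  have : A = 0 ∨ B = 0 := by
    rcases mul_eq_zero.1 hAB0 with h | h
    · left; simpa using h
    · exact Or.inr h
  rcases this with rfl | rfl
  · refine hρ ⟨B * mq / xq, ?_⟩
    push_cast
    field_simp
    rw [← hμ2]
    rw [hAB] at hμν
    push_cast at hμν
    linarith
  · exact hν ⟨A, by rw [hAB]; simp⟩

/-- The conjugate of an integral element under `μ ↦ e μ`, `ν ↦ f ν`, `ρ ↦ e f ρ` is integral. The
conjugation is realised through its graph, a subring of `ℝ × ℝ` whose first projection is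
injective. -/
lemma conj_integral {x y z : ℕ} {μ ν ρ : ℝ} (hμ2 : μ ^ 2 = x * y) (hν2 : ν ^ 2 = x * z)
    (hρ2 : ρ ^ 2 = y * z)
    (hμν : μ * ν = x * ρ) (hμρ : μ * ρ = y * ν) (hνρ : ν * ρ = z * μ)
    (hind : ∀ p q s t : ℚ, (p : ℝ) + q * μ + s * ν + t * ρ = 0 →
      p = 0 ∧ q = 0 ∧ s = 0 ∧ t = 0)
    (e f : ℝ) (he : e ^ 2 = 1) (hf : f ^ 2 = 1) (p q s t : ℚ)
    (h : IsIntegral ℤ ((p : ℝ) + q * μ + s * ν + t * ρ)) :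
    IsIntegral ℤ ((p : ℝ) + q * (e * μ) + s * (f * ν) + t * (e * f * ρ)) := by
  let R : Subring (ℝ × ℝ) :=
    { carrier := {w | ∃ p q s t : ℚ, w = ((p : ℝ) + q * μ + s * ν + t * ρ,
        (p : ℝ) + q * (e * μ) + s * (f * ν) + t * (e * f * ρ))}
      mul_mem' := by
        rintro _ _ ⟨p, q, s, t, rfl⟩ ⟨p', q', s', t', rfl⟩
        refine ⟨p * p' + x * y * q * q' + x * z * s * s' + y * z * t * t',
          p * q' + q * p' + z * (s * t' + t * s'), p * s' + s * p' + y * (q * t' + t * q'),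
          p * t' + t * p' + x * (q * s' + s * q'), ?_⟩
        refine Prod.ext ?_ ?_
        · simp only [Prod.fst_mul]
          push_cast
          linear_combination (q * q' : ℝ) * hμ2 + (s * s' : ℝ) * hν2 + (t * t' : ℝ) * hρ2
            + (q * s' + s * q' : ℝ) * hμν + (q * t' + t * q' : ℝ) * hμρ
            + (s * t' + t * s' : ℝ) * hνρ
        · simp only [Prod.snd_mul]
          push_cast
          linear_combination (q * q' : ℝ) * (e ^ 2 * hμ2 + x * y * he)
            + (s * s' : ℝ) * (f ^ 2 * hν2 + x * z * hf)
            + (t * t' : ℝ) * (e ^ 2 * f ^ 2 * hρ2 + y * z * (f ^ 2 * he + hf))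
            + (q * s' + s * q' : ℝ) * e * f * hμν
            + (q * t' + t * q' : ℝ) * (f * e ^ 2 * hμρ + f * y * ν * he)
            + (s * t' + t * s' : ℝ) * (e * f ^ 2 * hνρ + e * z * μ * hf)
      one_mem' := ⟨1, 0, 0, 0, by ext <;> simp⟩
      add_mem' := by
        rintro _ _ ⟨p, q, s, t, rfl⟩ ⟨p', q', s', t', rfl⟩
        refine ⟨p + p', q + q', s + s', t + t', ?_⟩
        refine Prod.ext ?_ ?_ <;> simp only [Prod.fst_add, Prod.snd_add] <;>
          push_cast <;> ring
      zero_mem' := ⟨0, 0, 0, 0, by ext <;> simp⟩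
      neg_mem' := by
        rintro _ ⟨p, q, s, t, rfl⟩
        refine ⟨-p, -q, -s, -t, ?_⟩
        refine Prod.ext ?_ ?_ <;> simp only [Prod.fst_neg, Prod.snd_neg] <;>
          push_cast <;> ring }
  let w : R := ⟨_, p, q, s, t, rfl⟩
  let φ : R →ₐ[ℤ] ℝ := ((RingHom.fst ℝ ℝ).comp R.subtype).toIntAlgHom
  let ψ : R →ₐ[ℤ] ℝ := ((RingHom.snd ℝ ℝ).comp R.subtype).toIntAlgHom
  have hφ : Function.Injective φ := by
    rw [injective_iff_map_eq_zero]
    rintro ⟨_, p, q, s, t, rfl⟩ h0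
    obtain ⟨rfl, rfl, rfl, rfl⟩ := hind p q s t h0
    exact Subtype.ext (by simp)
  have hw : IsIntegral ℤ w := (isIntegral_algHom_iff φ hφ).1 h
  exact hw.map ψ

lemma int_of_integral {q : ℚ} (h : IsIntegral ℤ (q : ℝ)) : ∃ a : ℤ, q = a := by
  have h' : IsIntegral ℤ q := by
    rw [← isIntegral_algebraMap_iff (B := ℝ) (algebraMap ℚ ℝ).injective]
    exact h
  obtain ⟨a, ha⟩ := IsIntegrallyClosed.isIntegral_iff.1 h'
  exact ⟨a, by simpa using ha.symm⟩

/-- A rational multiple of the square root of a squarefree number is integral only if the factor is an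
integer. -/
lemma int_of_integral_mul {q : ℚ} {m : ℕ} (hm : Squarefree m) {μ : ℝ} (hμ : μ ^ 2 = m)
    (h : IsIntegral ℤ (q * μ)) : ∃ a : ℤ, q = a := by
  have h2 : IsIntegral ℤ ((q ^ 2 * m : ℚ) : ℝ) := by
    have := h.pow 2
    rw [mul_pow, hμ] at this
    exact_mod_cast this
  obtain ⟨N, hN⟩ := int_of_integral h2
  have hden : q.den = 1 := by
    have hq : (q.num : ℚ) ^ 2 * m = N * (q.den : ℚ) ^ 2 := by
      rw [← hN, ← Rat.mul_den_eq_num q]; ring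
    have hq' : q.num ^ 2 * m = N * (q.den : ℤ) ^ 2 := by exact_mod_cast hq
    have hdvd : (q.den : ℤ) ^ 2 ∣ m := by
      have hcop : IsCoprime ((q.den : ℤ) ^ 2) (q.num ^ 2) := by
        apply IsCoprime.pow
        rw [Int.isCoprime_iff_gcd_eq_one, Int.gcd_comm]
        exact q.reduced
      exact hcop.dvd_of_dvd_mul_left ⟨N, by rw [hq']; ring⟩
    have hdvd' : q.den * q.den ∣ m := by
      rw [← sq]; exact_mod_cast hdvd
    exact Nat.isUnit_iff.1 (hm _ hdvd')
  exact ⟨q.num, (Rat.den_eq_one_iff q).1 hden |>.symm⟩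

lemma two_dvd_of_four_dvd {a b m : ℤ} (hm : 4 ∣ m - 1) (h : 4 ∣ a ^ 2 - m * b ^ 2) :
    2 ∣ b - a := by
  obtain ⟨j, hj⟩ := hm
  obtain ⟨e, he⟩ := h
  obtain rfl : m = 1 + 4 * j := by linarith
  have : (2 : ℤ) ∣ (b - a) ^ 2 := ⟨2 * e + 2 * j * b ^ 2 - a * b + b ^ 2, by linarith⟩
  exact Int.prime_two.dvd_of_dvd_pow this

/-- The condition modulo `4` on the coordinates of an integer of `K`. The hypotheses `hU` and `hV`
hold because the relative norm of the integer to `ℚ(√m)` is integral. When the coordinates are even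
`hU` decides; when they are odd `hV` does. -/
lemma mod_four {a b c d m n r z ε : ℤ} (hm : 4 ∣ m - 1) (hn : 4 ∣ n - 1) (hr : 4 ∣ r - 1)
    (hε : ε = 1 ∨ ε = -1) (hz : 4 ∣ z - ε)
    (hb : 2 ∣ b - a) (hc : 2 ∣ c - a) (hd : 2 ∣ d - a)
    (hU : 8 ∣ a ^ 2 + m * b ^ 2 - n * c ^ 2 - r * d ^ 2) (hV : 4 ∣ a * b - z * (c * d)) :
    4 ∣ a + b + c + ε * d := by
  obtain ⟨m, hm⟩ := hm
  obtain ⟨n, hn⟩ := hn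
  obtain ⟨r, hr⟩ := hr
  obtain ⟨w, hw⟩ := hz
  obtain ⟨b, hb⟩ := hb
  obtain ⟨c, hc⟩ := hc
  obtain ⟨d, hd⟩ := hd
  rw [sub_eq_iff_eq_add] at hm hn hr hw hb hc hd
  subst hm hn hr hw hb hc hd
  obtain ⟨U, hU⟩ := hU
  obtain ⟨V, hV⟩ := hV
  rcases Int.even_or_odd' a with ⟨e, rfl | rfl⟩
  · -- all coordinates even
    have h2 : (2 : ℤ) ∣ b + c + d := by
      have : (2 : ℤ) ∣ (b + c + d) ^ 2 := by
        refine ⟨U - 2 * m * (b + e) ^ 2 + 2 * n * (c + e) ^ 2 + 2 * r * (d + e) ^ 2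
          + c ^ 2 + d ^ 2 + c * e + d * e - b * e + b * c + b * d + c * d, ?_⟩
        linarith
      exact Int.prime_two.dvd_of_dvd_pow this
    rcases hε with rfl | rfl <;> omega
  · rcases hε with rfl | rfl
    · have key : 4 * V = 2 * (b - c - d) + 4 * (e * b - e * c - e * d - c * d
          - w * ((2 * c + (2 * e + 1)) * (2 * d + (2 * e + 1)))) := by
        rw [← hV]; ring
      omega
    · have key : 4 * V = 2 * (b + c + d) + 2 + 4 * (e * b + e * c + e * d + c * d
          + 2 * e ^ 2 + 2 * e
          - w * ((2 * c + (2 * e + 1)) * (2 * d + (2 * e + 1)))) := by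
        rw [← hV]; ring
      omega

lemma integral_congr {u v : ℝ} (h : IsIntegral ℤ u) (e : v = u) : IsIntegral ℤ v := e ▸ h

/-- The shape of the integers of `K` when `m ≡ n ≡ 1 (mod 4)`. The coordinates are read off from
sums of conjugates; the congruences express integrality of relative traces and norms. -/
lemma integral_coords {x y z : ℕ} {μ ν ρ : ℝ} (hμ2 : μ ^ 2 = x * y) (hν2 : ν ^ 2 = x * z)
    (hρ2 : ρ ^ 2 = y * z)
    (hμν : μ * ν = x * ρ) (hμρ : μ * ρ = y * ν) (hνρ : ν * ρ = z * μ)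
    (hind : ∀ p q s t : ℚ, (p : ℝ) + q * μ + s * ν + t * ρ = 0 →
      p = 0 ∧ q = 0 ∧ s = 0 ∧ t = 0)
    (hxy : Squarefree (x * y)) (hxz : Squarefree (x * z)) (hyz : Squarefree (y * z))
    (hm : 4 ∣ ((x : ℤ) * y) - 1) (hn : 4 ∣ ((x : ℤ) * z) - 1) (hr : 4 ∣ ((y : ℤ) * z) - 1)
    {ε : ℤ} (hε : ε = 1 ∨ ε = -1) (hz : 4 ∣ (z : ℤ) - ε) (p q s t : ℚ)
    (h : IsIntegral ℤ ((p : ℝ) + q * μ + s * ν + t * ρ)) :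
    ∃ a b c d : ℤ, 4 * ((p : ℝ) + q * μ + s * ν + t * ρ) = a + b * μ + c * ν + d * ρ ∧
      2 ∣ b - a ∧ 2 ∣ c - a ∧ 2 ∣ d - a ∧ 4 ∣ a + b + c + ε * d := by
  have conj : ∀ e f : ℝ, e ^ 2 = 1 → f ^ 2 = 1 → _ := fun e f he hf =>
    conj_integral hμ2 hν2 hρ2 hμν hμρ hνρ hind e f he hf p q s t h
  have h1 := conj 1 1 (by norm_num) (by norm_num)
  have h2 := conj 1 (-1) (by norm_num) (by norm_num)
  have h3 := conj (-1) 1 (by norm_num) (by norm_num)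
  have h4 := conj (-1) (-1) (by norm_num) (by norm_num)
  obtain ⟨a, ha⟩ := int_of_integral (q := 4 * p) (by
    refine integral_congr (((h1.add h2).add h3).add h4) ?_
    push_cast; ring)
  obtain ⟨b, hb⟩ := int_of_integral_mul (q := 4 * q) hxy (μ := μ) (by push_cast; exact hμ2) (by
    refine integral_congr (((h1.add h2).sub h3).sub h4) ?_
    push_cast; ring)
  obtain ⟨c, hc⟩ := int_of_integral_mul (q := 4 * s) hxz (μ := ν) (by push_cast; exact hν2) (by
    refine integral_congr (((h1.sub h2).add h3).sub h4) ?_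
    push_cast; ring)
  obtain ⟨d, hd⟩ := int_of_integral_mul (q := 4 * t) hyz (μ := ρ) (by push_cast; exact hρ2) (by
    refine integral_congr (((h1.sub h2).sub h3).add h4) ?_
    push_cast; ring)
  obtain rfl : p = a / 4 := by linarith
  obtain rfl : q = b / 4 := by linarith
  obtain rfl : s = c / 4 := by linarith
  obtain rfl : t = d / 4 := by linarith
  have hb2 : 2 ∣ b - a := by
    obtain ⟨N, hN⟩ := int_of_integral (q := ((a : ℚ) ^ 2 - x * y * b ^ 2) / 4) (by
      refine integral_congr ((h1.add h2).mul (h3.add h4)) ?_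
      push_cast
      linear_combination (b ^ 2 / 4 : ℝ) * hμ2)
    refine two_dvd_of_four_dvd hm ⟨N, ?_⟩
    have : (a : ℚ) ^ 2 - x * y * b ^ 2 = 4 * N := by linarith
    exact_mod_cast this
  have hc2 : 2 ∣ c - a := by
    obtain ⟨N, hN⟩ := int_of_integral (q := ((a : ℚ) ^ 2 - x * z * c ^ 2) / 4) (by
      refine integral_congr ((h1.add h3).mul (h2.add h4)) ?_
      push_cast
      linear_combination (c ^ 2 / 4 : ℝ) * hν2)
    refine two_dvd_of_four_dvd hn ⟨N, ?_⟩
    have : (a : ℚ) ^ 2 - x * z * c ^ 2 = 4 * N := by linarith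
    exact_mod_cast this
  have hd2 : 2 ∣ d - a := by
    obtain ⟨N, hN⟩ := int_of_integral (q := ((a : ℚ) ^ 2 - y * z * d ^ 2) / 4) (by
      refine integral_congr ((h1.add h4).mul (h2.add h3)) ?_
      push_cast
      linear_combination (d ^ 2 / 4 : ℝ) * hρ2)
    refine two_dvd_of_four_dvd hr ⟨N, ?_⟩
    have : (a : ℚ) ^ 2 - y * z * d ^ 2 = 4 * N := by linarith
    exact_mod_cast this
  refine ⟨a, b, c, d, by push_cast; ring, hb2, hc2, hd2,
    mod_four hm hn hr hε hz hb2 hc2 hd2 ?_ ?_⟩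
  · obtain ⟨N, hN⟩ := int_of_integral
      (q := ((a : ℚ) ^ 2 + x * y * b ^ 2 - x * z * c ^ 2 - y * z * d ^ 2) / 8) (by
        refine integral_congr ((h1.mul h2).add (h3.mul h4)) ?_
        push_cast
        linear_combination (-b ^ 2 / 8 : ℝ) * hμ2 + (c ^ 2 / 8 : ℝ) * hν2
          + (d ^ 2 / 8 : ℝ) * hρ2)
    refine ⟨N, ?_⟩
    have : (a : ℚ) ^ 2 + x * y * b ^ 2 - x * z * c ^ 2 - y * z * d ^ 2 = 8 * N := by linarith
    exact_mod_cast this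
  · obtain ⟨N, hN⟩ := int_of_integral_mul (q := ((a : ℚ) * b - z * (c * d)) / 4) hxy (μ := μ)
      (by push_cast; exact hμ2) (by
        refine integral_congr ((h1.mul h2).sub (h3.mul h4)) ?_
        push_cast
        linear_combination (c * d / 4 : ℝ) * hνρ)
    refine ⟨N, ?_⟩
    have : (a : ℚ) * b - z * (c * d) = 4 * N := by linarith
    exact_mod_cast this

lemma exists_coords {x y z : ℕ} {μ ν ρ : ℝ} (hμ2 : μ ^ 2 = x * y) (hν2 : ν ^ 2 = x * z)
    (hρ2 : ρ ^ 2 = y * z)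
    (hμν : μ * ν = x * ρ) (hμρ : μ * ρ = y * ν) (hνρ : ν * ρ = z * μ) {ξ : ℝ}
    (hξ : ξ ∈ IntermediateField.adjoin ℚ {μ, ν, ρ}) :
    ∃ p q s t : ℚ, ξ = (p : ℝ) + q * μ + s * ν + t * ρ := by
  let A : Subalgebra ℚ ℝ :=
    { carrier := {w | ∃ p q s t : ℚ, w = (p : ℝ) + q * μ + s * ν + t * ρ}
      mul_mem' := by
        rintro _ _ ⟨p, q, s, t, rfl⟩ ⟨p', q', s', t', rfl⟩
        refine ⟨p * p' + x * y * q * q' + x * z * s * s' + y * z * t * t',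
          p * q' + q * p' + z * (s * t' + t * s'), p * s' + s * p' + y * (q * t' + t * q'),
          p * t' + t * p' + x * (q * s' + s * q'), ?_⟩
        push_cast
        linear_combination (q * q' : ℝ) * hμ2 + (s * s' : ℝ) * hν2 + (t * t' : ℝ) * hρ2
          + (q * s' + s * q' : ℝ) * hμν + (q * t' + t * q' : ℝ) * hμρ
          + (s * t' + t * s' : ℝ) * hνρ
      add_mem' := by
        rintro _ _ ⟨p, q, s, t, rfl⟩ ⟨p', q', s', t', rfl⟩
        exact ⟨p + p', q + q', s + s', t + t', by push_cast; ring⟩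
      algebraMap_mem' := fun r => ⟨r, 0, 0, 0, by simp⟩ }
  have alg : ∀ (w : ℝ) (u v : ℕ), w ^ 2 = u * v → IsAlgebraic ℚ w := fun w u v hw => by
    refine ⟨Polynomial.X ^ 2 - Polynomial.C (u * v : ℚ),
      Polynomial.X_pow_sub_C_ne_zero (by norm_num) _, by simp [hw]⟩
  have hle : Algebra.adjoin ℚ {μ, ν, ρ} ≤ A := by
    refine Algebra.adjoin_le ?_
    rintro w (rfl | rfl | rfl)
    · exact ⟨0, 1, 0, 0, by simp⟩
    · exact ⟨0, 0, 1, 0, by simp⟩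
    · exact ⟨0, 0, 0, 1, by simp⟩
  apply hle
  rw [← IntermediateField.adjoin_toSubalgebra_of_isAlgebraic]
  · exact hξ
  · rintro w (rfl | rfl | rfl)
    exacts [alg _ _ _ hμ2, alg _ _ _ hν2, alg _ _ _ hρ2]

/-! ### The element that is not a sum of squares -/

/-- Membership in `J` with the denominators `l` and `l - 2` cleared. -/
lemma bounds_of_mem_Jset {s k l : ℕ} (hl : 0 < l) {w : ℝ} (h : w ∈ Jset s k l) :
    s * k + 2 * √(s : ℝ) * √(l : ℝ) ≤ l * w ∧
    (3 ≤ l → ((l : ℝ) - 2) * w ≤ s * k - 2 * √(s : ℝ) * √((l : ℝ) - 2)) := by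
  have hl0 : (0 : ℝ) < l := by exact_mod_cast hl
  have scale : ∀ q A σ : ℝ, 0 < q → q * (A / q + 2 * σ / √q) = A + 2 * σ * √q := by
    intro q A σ hq
    have hL := Real.sqrt_pos.2 hq
    have hL2 := Real.sq_sqrt hq.le
    generalize √q = L at *
    subst hL2
    field_simp
  unfold Jset at h
  split_ifs at h with h2
  · refine ⟨?_, fun h3 => by omega⟩
    rw [← scale l _ _ hl0]
    exact mul_le_mul_of_nonneg_left h hl0.le
  · refine ⟨?_, fun h3 => ?_⟩
    · rw [← scale l _ _ hl0]
      exact mul_le_mul_of_nonneg_left h.1 hl0.le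
    · have hl3 : (3 : ℝ) ≤ l := by exact_mod_cast h3
      have hq : (0 : ℝ) < l - 2 := by linarith
      have h4 := mul_le_mul_of_nonneg_left h.2 hq.le
      have h5 := scale (l - 2) (s * k) (-√(s : ℝ)) hq
      calc _ ≤ _ := h4
        _ = _ := by linear_combination h5

lemma irrational_sqrt_of_squarefree {q : ℕ} (hq : Squarefree q) (h1 : 1 < q) :
    Irrational √(q : ℝ) := by
  rw [irrational_sqrt_natCast_iff]
  rintro ⟨u, rfl⟩
  have := Nat.isUnit_iff.1 (hq u dvd_rfl)
  subst this
  omega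

/-- The result when the radicands are `x z < x y < y z` with `x < z < y`, for the field generated by
the three square roots. The element used is `(a₀ + k √(x y)) / 2` with `a₀ = k + 2 j`. -/
lemma main_xyz (x y z : ℕ) (hx : 0 < x) (hxz : x < z) (hzy : z < y)
    (sxy : Squarefree (x * y)) (sxz : Squarefree (x * z)) (syz : Squarefree (y * z))
    (ε : ℤ) (hε : ε = 1 ∨ ε = -1)
    (hx4 : 4 ∣ (x : ℤ) - ε) (hy4 : 4 ∣ (y : ℤ) - ε) (hz4 : 4 ∣ (z : ℤ) - ε)
    (s l k : ℕ) (hs : 0 < s) (hl : 0 < l) (hk : 0 < k)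
    (hpar : l % 2 = (s * k) % 2)
    (h₂ : √((x * z : ℕ) : ℝ) ∈ Jset s k l)
    (h₃ : √((y * z : ℕ) : ℝ) ∈ Jset s k l)
    (F : IntermediateField ℚ ℝ)
    (hF : F = IntermediateField.adjoin ℚ
      {√((x * y : ℕ) : ℝ), √((x * z : ℕ) : ℝ), √((y * z : ℕ) : ℝ)}) :
    ∃ α : ℝ, (α ∈ F ∧ IsIntegral ℤ α) ∧ (∃ h : α ∈ F, ∀ σ : F →+* ℝ, 0 < σ ⟨α, h⟩) ∧
      ¬ ∃ (t : ℕ) (ξ : Fin t → ℝ), (∀ i, ξ i ∈ F ∧ IsIntegral ℤ (ξ i)) ∧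
        (s : ℝ) * α = ∑ i, ξ i ^ 2 := by
  have cop : ∀ u v : ℤ, 4 ∣ u - ε → 4 ∣ v - ε → 4 ∣ u * v - 1 := by
    rintro u v ⟨u', hu⟩ ⟨v', hv⟩
    obtain rfl : u = ε + 4 * u' := by linarith
    obtain rfl : v = ε + 4 * v' := by linarith
    have hε2 : ε ^ 2 = 1 := by rcases hε with rfl | rfl <;> norm_num
    exact ⟨ε * u' + ε * v' + 4 * u' * v', by linear_combination hε2⟩
  have hm := cop x y hx4 hy4
  have hn := cop x z hx4 hz4
  have hr := cop y z hy4 hz4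
  have irrμ := irrational_sqrt_of_squarefree sxy (by nlinarith)
  have irrν := irrational_sqrt_of_squarefree sxz (by nlinarith)
  have irrρ := irrational_sqrt_of_squarefree syz (by nlinarith)
  have hlow := (bounds_of_mem_Jset hl h₂).1
  have hup := (bounds_of_mem_Jset hl h₃).2
  have hνμ : √((x * z : ℕ) : ℝ) < √((x * y : ℕ) : ℝ) :=
    Real.sqrt_lt_sqrt (by positivity) (by exact_mod_cast Nat.mul_lt_mul_of_pos_left hzy hx)
  have hμρ' : √((x * y : ℕ) : ℝ) < √((y * z : ℕ) : ℝ) :=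
    Real.sqrt_lt_sqrt (by positivity) (by exact_mod_cast (by nlinarith : x * y < y * z))
  have eμ : √((x * y : ℕ) : ℝ) = √(x : ℝ) * √(y : ℝ) := by
    push_cast; exact Real.sqrt_mul (by positivity) _
  have eν : √((x * z : ℕ) : ℝ) = √(x : ℝ) * √(z : ℝ) := by
    push_cast; exact Real.sqrt_mul (by positivity) _
  have eρ : √((y * z : ℕ) : ℝ) = √(y : ℝ) * √(z : ℝ) := by
    push_cast; exact Real.sqrt_mul (by positivity) _
  have qx : √(x : ℝ) ^ 2 = x := Real.sq_sqrt (by positivity)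
  have qy : √(y : ℝ) ^ 2 = y := Real.sq_sqrt (by positivity)
  have qz : √(z : ℝ) ^ 2 = z := Real.sq_sqrt (by positivity)
  have hμ2 : √((x * y : ℕ) : ℝ) ^ 2 = x * y := by rw [eμ, mul_pow, qx, qy]
  have hν2 : √((x * z : ℕ) : ℝ) ^ 2 = x * z := by rw [eν, mul_pow, qx, qz]
  have hρ2 : √((y * z : ℕ) : ℝ) ^ 2 = y * z := by rw [eρ, mul_pow, qy, qz]
  have hμν : √((x * y : ℕ) : ℝ) * √((x * z : ℕ) : ℝ) = x * √((y * z : ℕ) : ℝ) := by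
    rw [eμ, eν, eρ, ← qx]; simp only [Real.sqrt_sq (Real.sqrt_nonneg _)]; ring
  have hμρ : √((x * y : ℕ) : ℝ) * √((y * z : ℕ) : ℝ) = y * √((x * z : ℕ) : ℝ) := by
    rw [eμ, eν, eρ, ← qy]; simp only [Real.sqrt_sq (Real.sqrt_nonneg _)]; ring
  have hνρ : √((x * z : ℕ) : ℝ) * √((y * z : ℕ) : ℝ) = z * √((x * y : ℕ) : ℝ) := by
    rw [eμ, eν, eρ, ← qz]; simp only [Real.sqrt_sq (Real.sqrt_nonneg _)]; ring
  have hμ : 0 < √((x * y : ℕ) : ℝ) := lt_of_le_of_lt (Real.sqrt_nonneg _) hνμ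
  clear eμ eν eρ qx qy qz h₂ h₃
  generalize √((x * y : ℕ) : ℝ) = μ at *
  generalize √((x * z : ℕ) : ℝ) = ν at *
  generalize √((y * z : ℕ) : ℝ) = ρ at *
  subst hF
  have hx0 : (x : ℝ) ≠ 0 := by positivity
  have hind : ∀ p q s t : ℚ, (p : ℝ) + q * μ + s * ν + t * ρ = 0 →
      p = 0 ∧ q = 0 ∧ s = 0 ∧ t = 0 := fun p q s t h =>
    lin_indep (x := x) (m := x * y) (n := x * z) (xq := x) (mq := x * y) (nq := x * z)
      (by simp) (by simp) (by simp) hx0 hμ2 hν2 hμν irrμ irrν irrρ h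
  have hk0 : (0 : ℝ) < k := by exact_mod_cast hk
  have hs0 : (0 : ℝ) < s := by exact_mod_cast hs
  -- `a₀` is the least integer congruent to `k` modulo `2` that exceeds `k μ`
  obtain ⟨j, hj1, hj2⟩ : ∃ j : ℤ, k * μ < k + 2 * j ∧ k + 2 * j < k * μ + 2 := by
    refine ⟨⌊(k * μ - k) / 2⌋ + 1, ?_, ?_⟩
    · have := Int.lt_floor_add_one ((k * μ - k) / 2)
      push_cast; linarith
    · have h := Int.floor_le ((k * μ - k) / 2)
      have hne : (⌊(k * μ - k) / 2⌋ : ℝ) ≠ (k * μ - k) / 2 := fun h => by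
        have := (irr_zero irrμ (p := k + 2 * (⌊(k * μ - k) / 2⌋ : ℤ)) (q := -k)
          (by push_cast; linarith)).2
        have : k = 0 := by simpa using this
        omega
      have := lt_of_le_of_ne h hne
      push_cast; linarith
  have hμF : μ ∈ IntermediateField.adjoin ℚ {μ, ν, ρ} :=
    IntermediateField.subset_adjoin _ _ (by simp)
  have hαF : (k + 2 * j + k * μ) / 2 ∈ IntermediateField.adjoin ℚ {μ, ν, ρ} :=
    div_mem (add_mem (add_mem (natCast_mem _ _) (mul_mem (ofNat_mem _ _) (intCast_mem _ _)))
      (mul_mem (natCast_mem _ _) hμF)) (ofNat_mem _ _)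
  refine ⟨(k + 2 * j + k * μ) / 2, ⟨hαF, ?_⟩, ⟨hαF, fun σ => ?_⟩, ?_⟩
  · obtain ⟨w, hw⟩ := hm
    have hu : IsIntegral ℤ ((1 + μ) / 2) := by
      refine ⟨X ^ 2 - X - C w, by monicity!, ?_⟩
      have hw' : (x * y : ℝ) - 1 = 4 * w := by exact_mod_cast hw
      simp only [eval₂_sub, eval₂_pow, eval₂_X, eval₂_C]
      simp only [algebraMap_int_eq, eq_intCast]
      linear_combination hμ2 / 4 + hw' / 4
    have hj : IsIntegral ℤ ((j : ℤ) : ℝ) := isIntegral_algebraMap (R := ℤ) (A := ℝ) (x := j)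
    have hki : IsIntegral ℤ ((k : ℤ) : ℝ) := isIntegral_algebraMap (R := ℤ) (A := ℝ) (x := k)
    refine integral_congr (hj.add (hki.mul hu)) ?_
    push_cast; ring
  · have hM : σ ⟨μ, hμF⟩ ^ 2 = μ ^ 2 := by
      rw [← map_pow, hμ2, show (⟨μ, hμF⟩ : IntermediateField.adjoin ℚ {μ, ν, ρ}) ^ 2
        = ((x * y : ℕ) : IntermediateField.adjoin ℚ {μ, ν, ρ}) from
        Subtype.ext (by push_cast; exact hμ2), map_natCast]
      push_cast; rfl
    have h2 : 2 * σ ⟨(k + 2 * j + k * μ) / 2, hαF⟩ = k + 2 * j + k * σ ⟨μ, hμF⟩ := by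
      have := congrArg σ (show ((2 : ℕ) : IntermediateField.adjoin ℚ {μ, ν, ρ})
          * ⟨(k + 2 * j + k * μ) / 2, hαF⟩ = (k : ℕ) + (2 : ℕ) * (j : ℤ) + (k : ℕ) * ⟨μ, hμF⟩ from
        Subtype.ext (by
          change ((2 : ℕ) : ℝ) * ((k + 2 * j + k * μ) / 2) = k + (2 : ℕ) * j + k * μ
          push_cast; ring))
      simp only [map_mul, map_add, map_natCast, map_intCast] at this
      push_cast at this
      exact this
    have hkμ : 0 < k * μ := by positivity
    rcases sq_eq_sq_iff_eq_or_eq_neg.1 hM with h | h <;> rw [h] at h2 <;> linarith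
  rintro ⟨t, ξ, hξ, hsum⟩
  have hco : ∀ i, ∃ a b c d : ℤ, 4 * ξ i = a + b * μ + c * ν + d * ρ ∧
      2 ∣ b - a ∧ 2 ∣ c - a ∧ 2 ∣ d - a ∧ 4 ∣ a + b + c + ε * d := fun i => by
    obtain ⟨p, q, s, t, he⟩ := exists_coords hμ2 hν2 hρ2 hμν hμρ hνρ (hξ i).1
    have hint := (hξ i).2
    rw [he] at hint ⊢
    exact integral_coords hμ2 hν2 hρ2 hμν hμρ hνρ hind sxy sxz syz hm hn hr hε hz4 p q s t hint
  choose a b c d hco hb hc hd h4 using hco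
  have hexp : ((∑ i, (a i ^ 2 + x * y * b i ^ 2 + x * z * c i ^ 2 + y * z * d i ^ 2)
        - 8 * s * (k + 2 * j) : ℤ) : ℝ)
      + ((2 * ∑ i, (a i * b i + z * (c i * d i)) - 8 * s * k : ℤ) : ℝ) * μ
      + ((2 * ∑ i, (a i * c i + y * (b i * d i)) : ℤ) : ℝ) * ν
      + ((2 * ∑ i, (a i * d i + x * (b i * c i)) : ℤ) : ℝ) * ρ = 0 := by
    have h16 : (16 : ℝ) * (s * ((k + 2 * j + k * μ) / 2))
        = ∑ i, (a i + b i * μ + c i * ν + d i * ρ) ^ 2 := by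
      rw [hsum, Finset.mul_sum]
      exact Finset.sum_congr rfl fun i _ => by rw [← hco i]; ring
    have h17 : ∑ i, ((a i : ℝ) + b i * μ + c i * ν + d i * ρ) ^ 2
        = ∑ i, ((a i : ℝ) ^ 2 + x * y * b i ^ 2 + x * z * c i ^ 2 + y * z * d i ^ 2)
        + 2 * μ * ∑ i, ((a i : ℝ) * b i + z * (c i * d i))
        + 2 * ν * ∑ i, ((a i : ℝ) * c i + y * (b i * d i))
        + 2 * ρ * ∑ i, ((a i : ℝ) * d i + x * (b i * c i)) := by
      simp only [Finset.mul_sum, ← Finset.sum_add_distrib]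
      refine Finset.sum_congr rfl fun i _ => ?_
      linear_combination (b i : ℝ) ^ 2 * hμ2 + (c i : ℝ) ^ 2 * hν2 + (d i : ℝ) ^ 2 * hρ2
        + 2 * (b i : ℝ) * c i * hμν + 2 * (b i : ℝ) * d i * hμρ + 2 * (c i : ℝ) * d i * hνρ
    push_cast
    linear_combination -h17 - h16
  have hindZ : ∀ p q s t : ℤ, (p : ℝ) + q * μ + s * ν + t * ρ = 0 →
      p = 0 ∧ q = 0 ∧ s = 0 ∧ t = 0 := fun p q s t h => by
    simpa using hind p q s t (by simpa using h)
  obtain ⟨E1, E2, E3, E4⟩ := hindZ _ _ _ _ hexp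
  have E1 := sub_eq_zero.1 E1
  have E2 : ∑ i, (a i * b i + z * (c i * d i)) = 4 * (s * k) := by linarith
  have E3 : ∑ i, (a i * c i + y * (b i * d i)) = 0 := by linarith
  have E4 : ∑ i, (a i * d i + x * (b i * c i)) = 0 := by linarith
  have hσ2 : √(s : ℝ) ^ 2 = s := Real.sq_sqrt hs0.le
  refine core a b c d x y z s l k μ ν ρ √(s : ℝ) √(l : ℝ) (8 * s * (k + 2 * j)) hμ hνμ hμρ'
    (Real.sqrt_pos.2 hs0) (Real.sqrt_pos.2 (by exact_mod_cast hl)) hμν hμρ hνρ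
    (Real.sq_sqrt (by positivity)) hs hk hl hpar hlow hup ?_ ?_ ?_ E2 E3 E4 ?_
  · rw [hμ2, hν2, hρ2]
    exact_mod_cast E1
  · rw [hσ2]
    nlinarith
  · intro i
    have := hd i
    have := hc i
    omega
  · rcases hε with rfl | rfl
    · exact parity a b c d x y z (s * k) hx4 hy4 hz4
        (fun i => by have := hb i; have := hc i; omega)
        (fun i => by have := hd i; have := hc i; omega) (fun i => by simpa using h4 i) E2 E3 E4
    · -- replacing `(d, x, y, z)` by its negative reduces to the case `ε = 1`
      obtain ⟨T, hT, hTk, hbd⟩ := parity a b c (fun i => -d i) (-x) (-y) (-z) (s * k)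
        (by omega) (by omega) (by omega)
        (fun i => by have := hb i; have := hc i; omega)
        (fun i => by have := hd i; have := hc i; omega)
        (fun i => by have := h4 i; omega)
        (by rw [← E2]; exact Finset.sum_congr rfl fun i _ => by ring)
        (by rw [← E3]; exact Finset.sum_congr rfl fun i _ => by ring)
        (by rw [← neg_zero, ← E4, ← Finset.sum_neg_distrib]
            exact Finset.sum_congr rfl fun i _ => by ring)
      have hbd' : (2 : ℤ) ∣ ∑ i, b i * d i := by
        simpa [mul_neg, Finset.sum_neg_distrib] using hbd
      refine ⟨T + ∑ i, b i * d i, ?_, ?_, hbd'⟩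
      · rw [mul_add, ← hT, Finset.mul_sum, ← Finset.sum_add_distrib]
        exact Finset.sum_congr rfl fun i _ => by ring
      · rw [add_sub_right_comm]
        exact dvd_add hTk hbd'

/-- **Proposition 1(3).** If `l ≡ s₀k (mod 2)`, `m ≡ n ≡ 1 (mod 4)`, `m, n ≥ 4s₀` and
`√m, √n, √r ∈ J`, then not all elements of `s₀𝒪_K⁺` are sums of squares. -/
theorem not_all_sums_of_squares_of_mem_J
    (m n r : ℕ) (hm : 1 < m) (hn : 1 < n) (hmn : m ≠ n)
    (hsm : Squarefree m) (hsn : Squarefree n)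
    (hr : r = m * n / Nat.gcd m n ^ 2)
    (s₀ l k : ℕ) (hs₀ : 0 < s₀) (hl : 0 < l) (hk : 0 < k)
    (hpar : l % 2 = (s₀ * k) % 2)
    (hm4 : m % 4 = 1) (hn4 : n % 4 = 1)
    (hms : 4 * s₀ ≤ m) (hns : 4 * s₀ ≤ n)
    (h₁ : Real.sqrt (m : ℝ) ∈ Jset s₀ k l) (h₂ : Real.sqrt (n : ℝ) ∈ Jset s₀ k l)
    (h₃ : Real.sqrt (r : ℝ) ∈ Jset s₀ k l) :
    ∃ α : ℝ, MemOK m n α ∧ IsTotPos m n α ∧ ¬ IsSumSqOK m n ((s₀ : ℝ) * α) := by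
  obtain ⟨m', n', hcop, hm', hn'⟩ := Nat.exists_coprime m n
  have hg : 0 < Nat.gcd m n := Nat.gcd_pos_of_pos_left _ (by omega)
  have hr' : r = m' * n' := by
    rw [hr]
    apply Nat.div_eq_of_eq_mul_left (by positivity)
    exact (congrArg₂ (· * ·) hm' hn').trans (by ring)
  clear hr
  generalize Nat.gcd m n = g at *
  subst hm' hn' hr'
  have hm'0 : 0 < m' := by rcases Nat.eq_zero_or_pos m' with rfl | h <;> omega
  have hn'0 : 0 < n' := by rcases Nat.eq_zero_or_pos n' with rfl | h <;> omega
  have ne1 : m' ≠ n' := fun h => hmn (by rw [h])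
  have ne2 : m' ≠ g := by
    rintro rfl
    have := Nat.isUnit_iff.1 (hsm m' dvd_rfl)
    subst this
    omega
  have ne3 : n' ≠ g := by
    rintro rfl
    have := Nat.isUnit_iff.1 (hsn n' dvd_rfl)
    subst this
    omega
  have hsr : Squarefree (m' * n') :=
    (Nat.squarefree_mul hcop).2 ⟨hsm.of_mul_left, hsn.of_mul_left⟩
  obtain ⟨ε, hε, hg4, hm'4, hn'4⟩ : ∃ ε : ℤ, (ε = 1 ∨ ε = -1) ∧ 4 ∣ (g : ℤ) - ε ∧
      4 ∣ (m' : ℤ) - ε ∧ 4 ∣ (n' : ℤ) - ε := by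
    rw [Nat.mul_mod] at hm4 hn4
    have hg' : g % 4 < 4 := Nat.mod_lt _ (by norm_num)
    have hm'' : m' % 4 < 4 := Nat.mod_lt _ (by norm_num)
    have hn'' : n' % 4 < 4 := Nat.mod_lt _ (by norm_num)
    have h : (g % 4 = 1 ∧ m' % 4 = 1 ∧ n' % 4 = 1) ∨ (g % 4 = 3 ∧ m' % 4 = 3 ∧ n' % 4 = 3) := by
      generalize g % 4 = u at *
      generalize m' % 4 = v at *
      generalize n' % 4 = w at *
      interval_cases u <;> omega
    rcases h with h | h
    · exact ⟨1, Or.inl rfl, by omega, by omega, by omega⟩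
    · exact ⟨-1, Or.inr rfl, by omega, by omega, by omega⟩
  -- adjoining `√r = √m √n / g` does not enlarge the field
  have hK : Kbq (m' * g) (n' * g) = IntermediateField.adjoin ℚ
      {√((m' * g : ℕ) : ℝ), √((n' * g : ℕ) : ℝ), √((m' * n' : ℕ) : ℝ)} := by
    apply le_antisymm
    · refine IntermediateField.adjoin.mono _ _ _ ?_
      rintro w (rfl | rfl) <;> simp
    · rw [IntermediateField.adjoin_le_iff]
      have h1 : √((m' * g : ℕ) : ℝ) ∈ Kbq (m' * g) (n' * g) :=
        IntermediateField.subset_adjoin _ _ (by simp)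
      have h2 : √((n' * g : ℕ) : ℝ) ∈ Kbq (m' * g) (n' * g) :=
        IntermediateField.subset_adjoin _ _ (by simp)
      rintro w (rfl | rfl | rfl)
      · exact h1
      · exact h2
      · have hg0 : (g : ℝ) ≠ 0 := by positivity
        have : √((m' * n' : ℕ) : ℝ) = √((m' * g : ℕ) : ℝ) * √((n' * g : ℕ) : ℝ) / g := by
          rw [eq_div_iff hg0, ← Real.sqrt_mul (by positivity)]
          have : (((m' * g : ℕ) : ℝ) * ((n' * g : ℕ) : ℝ)) = ((m' * n' : ℕ) : ℝ) * (g : ℝ) ^ 2 := by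
            push_cast; ring
          rw [this, Real.sqrt_mul (by positivity), Real.sqrt_sq (by positivity)]
        rw [this]
        exact div_mem (mul_mem h1 h2) (natCast_mem _ _)
  have key := fun x y z hx hxz hzy sxy sxz syz hx4 hy4 hz4 j2 j3 hF =>
    main_xyz x y z hx hxz hzy sxy sxz syz ε hε hx4 hy4 hz4 s₀ l k hs₀ hl hk hpar j2 j3
      (Kbq (m' * g) (n' * g)) hF
  have fin : ∀ x y z : ℕ, x < z → z < y →
      ((x = g ∧ y = m' ∧ z = n') ∨ (x = g ∧ y = n' ∧ z = m') ∨ (x = m' ∧ y = g ∧ z = n') ∨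
       (x = m' ∧ y = n' ∧ z = g) ∨ (x = n' ∧ y = g ∧ z = m') ∨ (x = n' ∧ y = m' ∧ z = g)) →
      ∃ α : ℝ, MemOK (m' * g) (n' * g) α ∧ IsTotPos (m' * g) (n' * g) α ∧
        ¬ IsSumSqOK (m' * g) (n' * g) ((s₀ : ℝ) * α) := by
    intro x y z hxz hzy hcases
    have hsm' := Nat.mul_comm m' g ▸ hsm
    have hsn' := Nat.mul_comm n' g ▸ hsn
    have hsr' := Nat.mul_comm m' n' ▸ hsr
    have h₁' := Nat.mul_comm m' g ▸ h₁
    have h₂' := Nat.mul_comm n' g ▸ h₂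
    have h₃' := Nat.mul_comm m' n' ▸ h₃
    rcases hcases with ⟨rfl, rfl, rfl⟩ | ⟨rfl, rfl, rfl⟩ | ⟨rfl, rfl, rfl⟩ | ⟨rfl, rfl, rfl⟩ |
      ⟨rfl, rfl, rfl⟩ | ⟨rfl, rfl, rfl⟩ <;>
    · refine key _ _ _ (by assumption) hxz hzy (by assumption) (by assumption) (by assumption)
        (by assumption) (by assumption) (by assumption) (by assumption) (by assumption) ?_
      rw [hK]
      congr 1
      ext w
      simp only [Set.mem_insert_iff, Set.mem_singleton_iff, Nat.mul_comm, or_comm,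
        or_left_comm, or_assoc]
  rcases lt_or_gt_of_ne ne1 with h1 | h1 <;> rcases lt_or_gt_of_ne ne2 with h2 | h2 <;>
    rcases lt_or_gt_of_ne ne3 with h3 | h3
  · exact fin m' g n' h1 h3 (by simp)
  · exact fin m' n' g h2 h3 (by simp)
  · omega
  · exact fin g n' m' h2 h1 (by simp)
  · exact fin n' g m' h1 h2 (by simp)
  · omega
  · exact fin n' m' g h3 h2 (by simp)
  · exact fin g m' n' h3 h1 (by simp)
end

section
/- Let s₀ and l be positive integers, let t be a positive integer, and let a₁, …, a_t, b₁, …, b_t be nonnegative integers satisfying Σᵢ aᵢbᵢ = s₀. Let D be a real number with D ∈ H_l(s₀). Then Σᵢ (aᵢ² + D·bᵢ²) ≥ s₀²/l + l·D. -/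
/-!
With `B = ∑ bᵢ²`, a positive integer, Cauchy–Schwarz gives `∑ aᵢ² ≥ s₀² / B`, so it suffices that
`x ↦ s₀² / x + D x` takes at `x = B` a value at least that at `x = l`. The difference of the two
values is `(B - l) (D - s₀² / (l B))`, and `D ∈ H_l(s₀)` says exactly that this
product is nonnegative for every positive integer `B`.
-/

/-- The interval `H_l(N) = [N²/(l(l+1)), N²/(l(l−1))]` for `l > 1`,
and `H₁(N) = [N²/2, ∞)`. -/
noncomputable def Hset (l N : ℕ) : Set ℝ :=
  if l = 1 then Set.Ici ((N : ℝ) ^ 2 / 2)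
  else Set.Icc ((N : ℝ) ^ 2 / ((l : ℝ) * ((l : ℝ) + 1)))
    ((N : ℝ) ^ 2 / ((l : ℝ) * ((l : ℝ) - 1)))

/-- **Lemma 1(i).** If `Σ aᵢbᵢ = s₀` and `D ∈ H_l(s₀)`, then
`Σ (aᵢ² + D·bᵢ²) ≥ s₀²/l + l·D`. -/
theorem sum_sq_add_mul_sq_ge
    (s₀ l t : ℕ) (hs₀ : 0 < s₀) (hl : 0 < l) (ht : 0 < t)
    (a b : Fin t → ℕ) (hab : ∑ i, a i * b i = s₀)
    (D : ℝ) (hD : D ∈ Hset l s₀) :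
    (s₀ : ℝ) ^ 2 / (l : ℝ) + (l : ℝ) * D ≤ ∑ i, ((a i : ℝ) ^ 2 + D * (b i : ℝ) ^ 2) := by
  set B : ℕ := ∑ i, b i ^ 2 with hB
  have hBpos : 0 < B := by
    rcases Nat.eq_zero_or_pos B with h0 | h0
    · have hb : ∀ i, b i = 0 := by
        intro i
        have h := (Finset.sum_eq_zero_iff.mp (hB.symm.trans h0)) i (Finset.mem_univ i)
        exact pow_eq_zero_iff (two_ne_zero) |>.mp h
      simp [hb] at hab
      omega
    · exact h0
  have hcs : (s₀ : ℝ) ^ 2 ≤ (∑ i, (a i : ℝ) ^ 2) * (B : ℝ) := by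
    have h := Finset.sum_mul_sq_le_sq_mul_sq Finset.univ (fun i => (a i : ℝ)) (fun i => (b i : ℝ))
    rw [← hab, hB]
    push_cast
    exact h
  have hsum : ∑ i, ((a i : ℝ) ^ 2 + D * (b i : ℝ) ^ 2)
      = (∑ i, (a i : ℝ) ^ 2) + D * (B : ℝ) := by
    rw [Finset.sum_add_distrib, ← Finset.mul_sum, hB]
    push_cast
    rfl
  have hBR : (0 : ℝ) < B := by exact_mod_cast hBpos
  have hlR : (0 : ℝ) < l := by exact_mod_cast hl
  have hA : (s₀ : ℝ) ^ 2 / B ≤ ∑ i, (a i : ℝ) ^ 2 := (div_le_iff₀ hBR).mpr hcs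
  -- Integrality of `B` gives `B ≤ l - 1`, `B = l` or `B ≥ l + 1`; the upper endpoint of `H_l(s₀)`
  -- settles the first case and the lower endpoint the last.
  have hkey : 0 ≤ ((B : ℝ) - l) * (D - (s₀ : ℝ) ^ 2 / (l * B)) := by
    rcases lt_trichotomy B l with h | h | h
    · have hBl : (B : ℝ) ≤ l - 1 := by
        have : (B : ℝ) + 1 ≤ l := by exact_mod_cast h
        linarith
      have hl1 : l ≠ 1 := by omega
      rw [Hset, if_neg hl1] at hD
      have h2 : (s₀ : ℝ) ^ 2 / (l * (l - 1)) ≤ (s₀ : ℝ) ^ 2 / (l * B) := by gcongr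
      exact mul_nonneg_of_nonpos_of_nonpos (by linarith) (by linarith [hD.2])
    · simp [h]
    · have hBl : (l : ℝ) + 1 ≤ B := by exact_mod_cast h
      have hlow : (s₀ : ℝ) ^ 2 / (l * (l + 1)) ≤ D := by
        by_cases hl1 : l = 1
        · rw [Hset, if_pos hl1] at hD
          have hD' : (s₀ : ℝ) ^ 2 / 2 ≤ D := hD
          subst hl1
          norm_num
          exact hD'
        · rw [Hset, if_neg hl1] at hD
          exact hD.1
      have h2 : (s₀ : ℝ) ^ 2 / (l * B) ≤ (s₀ : ℝ) ^ 2 / (l * (l + 1)) := by gcongr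
      exact mul_nonneg (by linarith) (by linarith)
  have hid : ((B : ℝ) - l) * (D - (s₀ : ℝ) ^ 2 / (l * B))
      = (s₀ : ℝ) ^ 2 / B + D * B - ((s₀ : ℝ) ^ 2 / l + l * D) := by
    field_simp
    ring
  rw [hsum]
  linarith
end

section
/- Let s₀ and l be positive integers, let t be a positive integer, and let a₁, …, a_t, b₁, …, b_t be nonnegative integers satisfying Σᵢ aᵢbᵢ = s₀. Let D be a real number with D ∈ H_l(2s₀). Then Σᵢ (aᵢ² + D·bᵢ²/4) ≥ s₀²/l + l·D/4. -/
/-- **Lemma 1(ii).** If `Σ aᵢbᵢ = s₀` and `D ∈ H_l(2s₀)`, then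
`Σ (aᵢ² + D·bᵢ²/4) ≥ s₀²/l + l·D/4`. -/
theorem sum_sq_add_mul_sq_div_four_ge
    (s₀ l t : ℕ) (hs₀ : 0 < s₀) (hl : 0 < l) (ht : 0 < t)
    (a b : Fin t → ℕ) (hab : ∑ i, a i * b i = s₀)
    (D : ℝ) (hD : D ∈ Hset l (2 * s₀)) :
    (s₀ : ℝ) ^ 2 / (l : ℝ) + (l : ℝ) * D / 4 ≤
      ∑ i, ((a i : ℝ) ^ 2 + D * (b i : ℝ) ^ 2 / 4) := by
  have hs : (0 : ℝ) < s₀ := by exact_mod_cast hs₀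
  have hl' : (0 : ℝ) < l := by exact_mod_cast hl
  obtain ⟨B, hB⟩ : ∃ B : ℕ, B = ∑ i, b i ^ 2 := ⟨_, rfl⟩
  have hBr : (B : ℝ) = ∑ i, (b i : ℝ) ^ 2 := by rw [hB]; push_cast; rfl
  have habr : (s₀ : ℝ) = ∑ i, (a i : ℝ) * (b i : ℝ) := by rw [← hab]; push_cast; rfl
  have hcs : (s₀ : ℝ) ^ 2 ≤ (∑ i, (a i : ℝ) ^ 2) * B := by
    rw [habr, hBr]
    exact Finset.sum_mul_sq_le_sq_mul_sq _ _ _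
  have hB0 : 0 < B := by
    rcases Nat.eq_zero_or_pos B with h | h
    · rw [h] at hcs
      push_cast at hcs
      nlinarith [pow_pos hs 2]
    · exact h
  have hB0' : (0 : ℝ) < B := by exact_mod_cast hB0
  have hsum : ∑ i, ((a i : ℝ) ^ 2 + D * (b i : ℝ) ^ 2 / 4)
      = (∑ i, (a i : ℝ) ^ 2) + B * D / 4 := by
    rw [Finset.sum_add_distrib, ← Finset.sum_div, ← Finset.mul_sum, ← hBr, mul_comm D]
  have hA : (s₀ : ℝ) ^ 2 / B ≤ ∑ i, (a i : ℝ) ^ 2 := (div_le_iff₀ hB0').2 hcs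
  have hlow : (s₀ : ℝ) ^ 2 / (l * (l + 1)) ≤ D / 4 := by
    have h : ((2 * s₀ : ℕ) : ℝ) ^ 2 / ((l : ℝ) * ((l : ℝ) + 1)) ≤ D := by
      unfold Hset at hD
      split_ifs at hD with h1
      · subst h1
        norm_num at hD ⊢
        exact hD
      · exact hD.1
    have e : ((2 * s₀ : ℕ) : ℝ) ^ 2 / ((l : ℝ) * ((l : ℝ) + 1))
        = 4 * ((s₀ : ℝ) ^ 2 / (l * (l + 1))) := by push_cast; ring
    linarith
  have hprod : 0 ≤ ((B : ℝ) - l) * (D / 4 - (s₀ : ℝ) ^ 2 / (l * B)) := by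
    rcases lt_trichotomy B l with h | h | h
    · have hBl : (B : ℝ) + 1 ≤ l := by exact_mod_cast h
      -- `1 ≤ B < l` excludes `l = 1`, where the interval has no upper endpoint
      have hl1 : l ≠ 1 := by omega
      have hup : D ≤ ((2 * s₀ : ℕ) : ℝ) ^ 2 / ((l : ℝ) * ((l : ℝ) - 1)) := by
        unfold Hset at hD
        rw [if_neg hl1] at hD
        exact hD.2
      have e : ((2 * s₀ : ℕ) : ℝ) ^ 2 / ((l : ℝ) * ((l : ℝ) - 1))
          = 4 * ((s₀ : ℝ) ^ 2 / (l * (l - 1))) := by push_cast; ring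
      have h2 : (s₀ : ℝ) ^ 2 / (l * (l - 1)) ≤ (s₀ : ℝ) ^ 2 / (l * B) := by
        gcongr
        linarith
      exact mul_nonneg_of_nonpos_of_nonpos (by linarith) (by linarith)
    · simp [h]
    · have hBl : (l : ℝ) + 1 ≤ B := by exact_mod_cast h
      have h2 : (s₀ : ℝ) ^ 2 / (l * B) ≤ (s₀ : ℝ) ^ 2 / (l * (l + 1)) := by
        gcongr
      exact mul_nonneg (by linarith) (by linarith)
  have e : ((B : ℝ) - l) * (D / 4 - (s₀ : ℝ) ^ 2 / (l * B))
      = (s₀ : ℝ) ^ 2 / B + B * D / 4 - ((s₀ : ℝ) ^ 2 / l + l * D / 4) := by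
    field_simp
    ring
  rw [hsum]
  linarith
end

section
/- Let s₀ and l be positive integers with l ≡ s₀ (mod 2), let t be a positive integer, and let a₁, …, a_t, b₁, …, b_t be nonnegative integers satisfying aᵢ ≡ bᵢ (mod 2) for every i and Σᵢ aᵢbᵢ = s₀. Let D be a real number with D ∈ H'_l(s₀). Then Σᵢ (aᵢ² + D·bᵢ²) ≥ s₀²/l + l·D. -/
/-!
Put `A = ∑ aᵢ²` and `B = ∑ bᵢ²`. Cauchy–Schwarz gives `A * B ≥ s₀²`, and `B > 0`, so it suffices that
`s₀² / B + D * B - (s₀² / l + D * l) = (B - l) * (D - s₀² / (l * B))` is nonnegative.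
Since `aᵢ ≡ bᵢ (mod 2)`, each `bᵢ² ≡ aᵢ * bᵢ`, whence `B ≡ s₀ ≡ l (mod 2)`. Thus `B = l`, `B ≥ l + 2`
or `B ≤ l - 2`, and the two endpoints of `H'_l(s₀)` are exactly what makes both factors have the
same sign in the last two cases.
-/

/-- The interval `H'_l(N) = [N²/(l(l+2)), N²/(l(l−2))]` for `l > 2`,
and `H'_l(N) = [N²/(l(l+2)), ∞)` for `l ∈ {1, 2}`. -/
noncomputable def H'set (l N : ℕ) : Set ℝ :=
  if l ≤ 2 then Set.Ici ((N : ℝ) ^ 2 / ((l : ℝ) * ((l : ℝ) + 2)))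
  else Set.Icc ((N : ℝ) ^ 2 / ((l : ℝ) * ((l : ℝ) + 2)))
    ((N : ℝ) ^ 2 / ((l : ℝ) * ((l : ℝ) - 2)))

lemma sum_sq_mod_two_eq {t : ℕ} (a b : Fin t → ℕ) (h : ∀ i, a i % 2 = b i % 2) :
    (∑ i, b i ^ 2) % 2 = (∑ i, a i * b i) % 2 := by
  rw [Finset.sum_nat_mod, Finset.sum_nat_mod (f := fun i => a i * b i)]
  congr 1
  refine Finset.sum_congr rfl fun i _ => ?_
  rw [pow_two, Nat.mul_mod, ← h i, Nat.mul_mod (a i) (b i), ← h i]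

/-- The two factors have the same sign when `D` lies in `H'_l(s)` and `B ≡ l (mod 2)`. -/
lemma mul_nonneg_of_mem_H'set {l s B : ℕ} (hl : 0 < l) (hB : 0 < B) (hpar : B % 2 = l % 2)
    {D : ℝ} (hD : D ∈ H'set l s) :
    0 ≤ ((B : ℝ) - l) * (D * l * B - (s : ℝ) ^ 2) := by
  have hl' : (0 : ℝ) < l := by exact_mod_cast hl
  have hlow : (s : ℝ) ^ 2 / ((l : ℝ) * ((l : ℝ) + 2)) ≤ D := by
    unfold H'set at hD
    split_ifs at hD
    · exact hD
    · exact hD.1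
  have hD0 : 0 ≤ D := le_trans (by positivity) hlow
  rw [div_le_iff₀ (by positivity)] at hlow
  have hDl : 0 ≤ D * l := by positivity
  obtain h | h | h : B = l ∨ l + 2 ≤ B ∨ B + 2 ≤ l := by omega
  · simp [h]
  · have h' : (l : ℝ) + 2 ≤ B := by exact_mod_cast h
    refine mul_nonneg (by linarith) ?_
    nlinarith [mul_le_mul_of_nonneg_left h' hDl]
  · have h' : (B : ℝ) + 2 ≤ l := by exact_mod_cast h
    have hB' : (0 : ℝ) < B := by exact_mod_cast hB
    have hup : D ≤ (s : ℝ) ^ 2 / ((l : ℝ) * ((l : ℝ) - 2)) := by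
      -- `B ≥ 1` forces `l ≥ 3`, so the interval has an upper endpoint
      rw [H'set, if_neg (by omega)] at hD
      exact hD.2
    rw [le_div_iff₀ (mul_pos hl' (by linarith))] at hup
    refine mul_nonneg_of_nonpos_of_nonpos (by linarith) ?_
    have : (B : ℝ) ≤ l - 2 := by linarith
    nlinarith [mul_le_mul_of_nonneg_left this hDl]

/-- **Lemma 2 (case `s₀ ≡ l (mod 2)`).** If `aᵢ ≡ bᵢ (mod 2)`, `Σ aᵢbᵢ = s₀`,
`l ≡ s₀ (mod 2)` and `D ∈ H'_l(s₀)`, then `Σ (aᵢ² + D·bᵢ²) ≥ s₀²/l + l·D`. -/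
theorem sum_sq_add_mul_sq_ge_of_parity_eq
    (s₀ l t : ℕ) (hs₀ : 0 < s₀) (hl : 0 < l) (ht : 0 < t)
    (hpar : l % 2 = s₀ % 2)
    (a b : Fin t → ℕ) (habpar : ∀ i, a i % 2 = b i % 2)
    (hab : ∑ i, a i * b i = s₀)
    (D : ℝ) (hD : D ∈ H'set l s₀) :
    (s₀ : ℝ) ^ 2 / (l : ℝ) + (l : ℝ) * D ≤ ∑ i, ((a i : ℝ) ^ 2 + D * (b i : ℝ) ^ 2) := by
  have hBpar : (∑ i, b i ^ 2) % 2 = l % 2 := by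
    rw [sum_sq_mod_two_eq a b habpar, hab, hpar]
  have hCS : s₀ ^ 2 ≤ (∑ i, a i ^ 2) * ∑ i, b i ^ 2 := by
    rw [← hab]
    exact Finset.sum_mul_sq_le_sq_mul_sq _ _ _
  have hB : 0 < ∑ i, b i ^ 2 := by
    by_contra h
    have h0 : ∑ i, b i ^ 2 = 0 := by omega
    rw [h0, mul_zero] at hCS
    have := pow_pos hs₀ 2
    omega
  have key := mul_nonneg_of_mem_H'set hl hB hBpar hD
  have hsum : ∑ i, ((a i : ℝ) ^ 2 + D * (b i : ℝ) ^ 2)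
      = ((∑ i, a i ^ 2 : ℕ) : ℝ) + D * ((∑ i, b i ^ 2 : ℕ) : ℝ) := by
    push_cast
    rw [Finset.sum_add_distrib, Finset.mul_sum]
  rw [hsum]
  generalize (∑ i, a i ^ 2) = A at *
  generalize (∑ i, b i ^ 2) = B at *
  have hl' : (0 : ℝ) < l := by exact_mod_cast hl
  have hB' : (0 : ℝ) < B := by exact_mod_cast hB
  have hCS' : (s₀ : ℝ) ^ 2 ≤ A * B := by exact_mod_cast hCS
  have hA : (s₀ : ℝ) ^ 2 / B ≤ A := by rwa [div_le_iff₀ hB']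
  have hid : (s₀ : ℝ) ^ 2 / B + D * B - ((s₀ : ℝ) ^ 2 / l + l * D)
      = ((B : ℝ) - l) * (D * l * B - (s₀ : ℝ) ^ 2) / (l * B) := by
    field_simp
    ring
  have hnn : 0 ≤ ((B : ℝ) - l) * (D * l * B - (s₀ : ℝ) ^ 2) / (l * B) := by positivity
  linarith
end

section
/- Let s₀ be a positive integer. Suppose m ≡ 2 (mod 4), n ≡ 3 (mod 4), m ≥ (2s₀+4)², r ≥ (2s₀+4)², and n ≥ (s₀/2 + 4)². Then not all elements of s₀𝒪_K⁺ can be represented as a sum of squares in 𝒪_K; i.e., there exists a totally positive α ∈ 𝒪_K such that s₀α is not a sum of squares of elements of 𝒪_K. -/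
/-!
Write `g = gcd(m, n)`, `m = pg`, `n = qg`, so that `r = pq`, and `u = √m`, `v = √n`, `w = uv/g = √r`.
Every `x ∈ K` is `a + bu + cv + dw` with rational coefficients, uniquely so
(`exists_coords`, `biquad_indep`). If `x` is integral, so are its conjugates; the traces to the
quadratic subfields show that `2a, 2b, 2c, 2d` are integers, and the rational part of the relative
norm to `ℚ(√n)`, read modulo `4`, shows that `2b ≡ 2d (mod 2)` (`half_integer_coords`).
Hence `b² + d² ≥ 1/2` unless `b = d = 0`.

Since `r ≡ 2 (mod 4)` too, and `ℚ(√m, √n) = ℚ(√r, √n)` (`Kbq_swap`), one may assume `m ≤ r`. Take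
`α = k + √m` with `k = ⌊√m⌋ + 1`; it is totally positive. If `s₀α = ∑ xᵢ²`, compare coefficients
(`exists_not_sumSq_of_le`). The coefficient of `√m` is `s₀ ≠ 0`, so some `xᵢ` has `(b, d) ≠ (0, 0)`.
The rational part of that `xᵢ²` is `a² + b²m + c²n + d²r ≥ m/2 ≥ (s₀ + 2)√m`, whereas the rational
part of the whole sum is `s₀k ≤ s₀(√m + 1)`, which is smaller.
-/

open Polynomial

theorem integral_of_eq {x y : ℝ} (h : IsIntegral ℤ x) (e : y = x) : IsIntegral ℤ y := e ▸ h

/-! ### Coordinates in the biquadratic field -/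

theorem biquad_rels (g p q : ℕ) (hg : g ≠ 0) (u v w : ℝ) (h1 : u ^ 2 = p * g)
    (h2 : v ^ 2 = q * g) (h3 : w * g = u * v) :
    u * w = p * v ∧ v * w = q * u ∧ w ^ 2 = p * q := by
  have hg' : (g : ℝ) ≠ 0 := by exact_mod_cast hg
  have e1 : u * w = p * v := mul_right_cancel₀ hg' (by linear_combination u * h3 + v * h1)
  exact ⟨e1, mul_right_cancel₀ hg' (by linear_combination v * h3 + u * h2),
    mul_right_cancel₀ hg' (by linear_combination w * h3 + v * e1 + p * h2)⟩

/-- The multiplication table of `1, u, v, w`, where `u² = pg`, `v² = qg`, `wg = uv`. -/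
theorem biquad_mul (g p q : ℕ) (hg : g ≠ 0) (u v w : ℝ) (h1 : u ^ 2 = p * g)
    (h2 : v ^ 2 = q * g) (h3 : w * g = u * v) (a b c d A B C D : ℚ) :
    (a + b * u + c * v + d * w : ℝ) * (A + B * u + C * v + D * w) =
      (a * A + b * B * (p * g) + c * C * (q * g) + d * D * (p * q) : ℚ) +
      (a * B + b * A + c * D * q + d * C * q : ℚ) * u +
      (a * C + c * A + b * D * p + d * B * p : ℚ) * v +
      (a * D + d * A + b * C * g + c * B * g : ℚ) * w := by
  obtain ⟨e1, e2, e3⟩ := biquad_rels g p q hg u v w h1 h2 h3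
  push_cast
  linear_combination b * B * h1 + c * C * h2 + d * D * e3 + (b * D + d * B) * e1 +
    (c * D + d * C) * e2 - (b * C + c * B) * h3

/-- The coordinates of `P(a + bu + cv + dw)` do not depend on the signs chosen for the square roots
`u, v, w`. This replaces the Galois action on `K`. -/
theorem aeval_conj (g p q : ℕ) (hg : g ≠ 0) (a b c d : ℚ) (P : ℤ[X]) :
    ∃ A B C D : ℚ, ∀ u v w : ℝ, u ^ 2 = p * g → v ^ 2 = q * g → w * g = u * v →
      aeval (a + b * u + c * v + d * w : ℝ) P = A + B * u + C * v + D * w := by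
  induction P using Polynomial.induction_on' with
  | add P Q hP hQ =>
    obtain ⟨A, B, C, D, h⟩ := hP
    obtain ⟨A', B', C', D', h'⟩ := hQ
    refine ⟨A + A', B + B', C + C', D + D', fun u v w h1 h2 h3 => ?_⟩
    rw [map_add, h u v w h1 h2 h3, h' u v w h1 h2 h3]
    push_cast
    ring
  | monomial k z =>
    induction k with
    | zero => exact ⟨z, 0, 0, 0, fun u v w _ _ _ => by simp⟩
    | succ k ih =>
      obtain ⟨A, B, C, D, h⟩ := ih
      refine ⟨A * a + B * b * (p * g) + C * c * (q * g) + D * d * (p * q),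
        A * b + B * a + C * d * q + D * c * q, A * c + C * a + B * d * p + D * b * p,
        A * d + D * a + B * c * g + C * b * g, fun u v w h1 h2 h3 => ?_⟩
      rw [← monomial_mul_X, map_mul, h u v w h1 h2 h3, aeval_X,
        biquad_mul g p q hg u v w h1 h2 h3]

/-- `1, u, v, w` span `ℚ(u, v)`. -/
theorem exists_coords_s19 (g p q : ℕ) (hg : g ≠ 0) (u v w : ℝ) (h1 : u ^ 2 = p * g) (h2 : v ^ 2 = q * g)
    (h3 : w * g = u * v) (x : ℝ) (hx : x ∈ IntermediateField.adjoin ℚ {u, v}) :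
    ∃ a b c d : ℚ, x = a + b * u + c * v + d * w := by
  have hu : IsAlgebraic ℚ u := ⟨X ^ 2 - C (p * g : ℚ), X_pow_sub_C_ne_zero (by norm_num) _, by
    simp [h1]⟩
  have hv : IsAlgebraic ℚ v := ⟨X ^ 2 - C (q * g : ℚ), X_pow_sub_C_ne_zero (by norm_num) _, by
    simp [h2]⟩
  rw [← IntermediateField.mem_toSubalgebra,
    IntermediateField.adjoin_toSubalgebra_of_isAlgebraic] at hx
  · induction hx using Algebra.adjoin_induction with
    | mem x hx =>
      rcases hx with rfl | rfl
      · exact ⟨0, 1, 0, 0, by simp⟩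
      · exact ⟨0, 0, 1, 0, by simp⟩
    | algebraMap r => exact ⟨r, 0, 0, 0, by simp⟩
    | add x y _ _ hx hy =>
      obtain ⟨a, b, c, d, rfl⟩ := hx
      obtain ⟨A, B, C, D, rfl⟩ := hy
      exact ⟨a + A, b + B, c + C, d + D, by push_cast; ring⟩
    | mul x y _ _ hx hy =>
      obtain ⟨a, b, c, d, rfl⟩ := hx
      obtain ⟨A, B, C, D, rfl⟩ := hy
      exact ⟨_, _, _, _, biquad_mul g p q hg u v w h1 h2 h3 a b c d A B C D⟩
  · rintro y (rfl | rfl)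
    exacts [hu, hv]

/-! ### Integers of the quadratic subfields -/

theorem int_of_rat (z : ℚ) (h : IsIntegral ℤ (z : ℝ)) : ∃ k : ℤ, z = k := by
  have : IsIntegral ℤ z := by
    have := (isIntegral_algebraMap_iff (R := ℤ) (A := ℚ) (B := ℝ) (x := z) (algebraMap ℚ ℝ).injective).1 (by simpa using h)
    exact this
  obtain ⟨k, hk⟩ := IsIntegrallyClosed.isIntegral_iff.1 this
  exact ⟨k, by simpa using hk.symm⟩

theorem sqf_int (d : ℕ) (hd : Squarefree d) (z : ℚ) (k : ℤ) (h : d * z ^ 2 = k) :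
    ∃ l : ℤ, z = l := by
  have h1 : (d : ℤ) * z.num ^ 2 = k * (z.den : ℤ) ^ 2 := by
    have hz : (z.den : ℚ) ≠ 0 := by exact_mod_cast z.den_nz
    have h2 : (d : ℚ) * z.num ^ 2 = k * (z.den : ℚ) ^ 2 := by
      rw [← h]
      nth_rw 2 [← Rat.num_div_den z]
      field_simp
    exact_mod_cast h2
  have h3 : (z.den : ℤ) ^ 2 ∣ d :=
    (IsCoprime.pow (Int.isCoprime_iff_gcd_eq_one.2 (by
      have := z.reduced
      simpa [Int.gcd, Nat.gcd_comm, Nat.Coprime] using this.symm))).dvd_of_dvd_mul_right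
      (Dvd.intro_left _ h1.symm)
  have h4 : z.den * z.den ∣ d := by rw [← sq]; exact_mod_cast h3
  have h5 := Nat.isUnit_iff.1 (hd _ h4)
  exact ⟨z.num, (Rat.den_eq_one_iff z).1 h5 |>.symm⟩

/-- The integers of `ℚ(√d)` for squarefree `d ≡ 2, 3 (mod 4)` are `ℤ[√d]`; integrality of the
conjugate is taken as a hypothesis. -/
theorem quad_int (d : ℕ) (hd : Squarefree d) (h4 : d % 4 = 2 ∨ d % 4 = 3) (s : ℝ) (hs : s ^ 2 = d)
    (a b : ℚ) (h : IsIntegral ℤ (a + b * s : ℝ)) (h' : IsIntegral ℤ (a - b * s : ℝ)) :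
    (∃ k : ℤ, a = k) ∧ ∃ k : ℤ, b = k := by
  obtain ⟨e, he⟩ := int_of_rat (2 * a) (by refine integral_of_eq (h.add h') ?_; push_cast; ring)
  obtain ⟨k, hk⟩ := int_of_rat (a ^ 2 - d * b ^ 2) (by
    refine integral_of_eq (h.mul h') ?_; push_cast; linear_combination (b ^ 2 : ℝ) * hs)
  obtain ⟨f, hf⟩ := sqf_int d hd (2 * b) (e ^ 2 - 4 * k) (by
    push_cast; rw [← he, ← hk]; ring)
  have key : e ^ 2 - d * f ^ 2 = 4 * k := by
    have : (e : ℚ) ^ 2 - d * f ^ 2 = 4 * k := by rw [← he, ← hk, ← hf]; ring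
    exact_mod_cast this
  obtain ⟨t, ht⟩ : ∃ t : ℤ, (d : ℤ) = 4 * t + 2 ∨ (d : ℤ) = 4 * t + 3 := ⟨d / 4, by omega⟩
  have hpar : Even e ∧ Even f := by
    rcases Int.even_or_odd' e with ⟨e', rfl | rfl⟩ <;> rcases Int.even_or_odd' f with ⟨f', rfl | rfl⟩
    · simp
    · rcases ht with ht | ht <;> rw [ht] at key <;> ring_nf at key <;> omega
    · rcases ht with ht | ht <;> rw [ht] at key <;> ring_nf at key <;> omega
    · rcases ht with ht | ht <;> rw [ht] at key <;> ring_nf at key <;> omega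
  obtain ⟨⟨e', rfl⟩, ⟨f', rfl⟩⟩ := hpar
  push_cast at he hf
  exact ⟨⟨e', by linarith⟩, ⟨f', by linarith⟩⟩

/-! ### Linear independence of `1, √m, √n, √r` -/

theorem not_rat_sqrt (d : ℕ) (h4 : d % 4 = 2 ∨ d % 4 = 3) (z : ℚ) : z ^ 2 ≠ d := by
  intro h
  have h1 : IsSquare (d : ℚ) := ⟨z, by rw [← h, sq]⟩
  rw [Rat.isSquare_natCast_iff] at h1
  obtain ⟨k, rfl⟩ := h1
  have := Nat.mod_lt k (show 0 < 4 by norm_num)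
  rw [Nat.mul_mod] at h4
  interval_cases k % 4 <;> omega

theorem quad_indep (d : ℕ) (h4 : d % 4 = 2 ∨ d % 4 = 3) (s : ℝ) (hs : s ^ 2 = d)
    (a b : ℚ) (h : (a + b * s : ℝ) = 0) : a = 0 ∧ b = 0 := by
  by_cases hb : b = 0
  · subst hb; simpa using h
  · exfalso
    apply not_rat_sqrt d h4 (a / b)
    have : (a : ℝ) ^ 2 = d * b ^ 2 := by linear_combination (a - b * s) * h + b ^ 2 * hs
    have : a ^ 2 = d * b ^ 2 := by exact_mod_cast this
    field_simp
    linarith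

/-- A nontrivial relation would give either a relation between `1` and `√m`, or `√n = A + B√m`;
squaring the latter makes `√n` or `√r` rational. -/
theorem biquad_indep (g p q : ℕ) (hg : g ≠ 0) (hm : p * g % 4 = 2) (hn : q * g % 4 = 3)
    (hr : p * q % 4 = 2) (u v w : ℝ) (h1 : u ^ 2 = p * g) (h2 : v ^ 2 = q * g)
    (h3 : w * g = u * v) (a b c d : ℚ) (h : (a + b * u + c * v + d * w : ℝ) = 0) :
    a = 0 ∧ b = 0 ∧ c = 0 ∧ d = 0 := by
  have hg' : (g : ℝ) ≠ 0 := by exact_mod_cast hg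
  have hg' : (g : ℝ) ≠ 0 := by exact_mod_cast hg
  have hgQ : (g : ℚ) ≠ 0 := by exact_mod_cast hg
  have e1 : u * w = p * v := mul_right_cancel₀ hg' (by linear_combination u * h3 + v * h1)
  have e3 : w ^ 2 = p * q := mul_right_cancel₀ hg' (by linear_combination w * h3 + v * e1 + p * h2)
  have I := quad_indep (p * g) (Or.inl hm) u (by push_cast; exact h1)
  -- the relation, times `g`, is `(ag + bgu) + (cg + du)v = 0`; multiply it by `cg - du`
  have hv : ((c * g) ^ 2 - d ^ 2 * (p * g) : ℝ) * v =
      -((a * g + b * g * u) * (c * g - d * u)) := by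
    linear_combination (c * g - d * u) * g * h + d ^ 2 * v * h1 - (c * g - d * u) * d * h3
  by_cases hN : (c * g) ^ 2 - d ^ 2 * (p * g) = 0
  · have hd : d = 0 := by
      by_contra hd
      apply not_rat_sqrt (p * g) (Or.inl hm) (c * g / d)
      rw [div_pow, div_eq_iff (pow_ne_zero 2 hd)]
      push_cast
      linarith
    subst hd
    have hc : c = 0 := by simpa [hgQ] using hN
    subst hc
    have := I a b (by simpa using h)
    simp [this]
  · exfalso
    set N : ℚ := (c * g) ^ 2 - d ^ 2 * (p * g) with hNdef
    set A : ℚ := -(a * g * (c * g) - b * g * d * (p * g)) / N with hA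
    set B : ℚ := -(b * g * (c * g) - a * g * d) / N with hB
    have hA' : A * N = -(a * g * (c * g) - b * g * d * (p * g)) := by rw [hA]; field_simp
    have hB' : B * N = -(b * g * (c * g) - a * g * d) := by rw [hB]; field_simp
    have hNR : (N : ℝ) ≠ 0 := by exact_mod_cast hN
    have hv' : v = A + B * u := by
      apply mul_left_cancel₀ hNR
      have hA'' : (A * N : ℝ) = -(a * g * (c * g) - b * g * d * (p * g)) := by exact_mod_cast hA'
      have hB'' : (B * N : ℝ) = -(b * g * (c * g) - a * g * d) := by exact_mod_cast hB'
      have hN'' : (N : ℝ) = (c * g) ^ 2 - d ^ 2 * (p * g) := by rw [hNdef]; push_cast; ring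
      have : (N : ℝ) * v = -((a * g + b * g * u) * (c * g - d * u)) := by rw [hN'']; exact hv
      rw [this]
      linear_combination b * g * d * h1 - hA'' - u * hB''
    obtain ⟨-, hAB⟩ := I (A ^ 2 + B ^ 2 * (p * g) - q * g) (2 * A * B) (by
      push_cast
      rw [hv'] at h2
      linear_combination h2 - B ^ 2 * h1)
    rcases mul_eq_zero.1 hAB with hA0 | hB0
    · have hA0 : A = 0 := by simpa using hA0
      rw [hA0] at hv'
      apply not_rat_sqrt (p * q) (Or.inl hr) (B * p)
      have : w = B * p := mul_right_cancel₀ hg' (by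
        rw [h3, hv']; push_cast; linear_combination B * h1)
      rw [this] at e3
      push_cast
      exact_mod_cast e3
    · rw [hB0] at hv'
      apply not_rat_sqrt (q * g) (Or.inr hn) A
      rw [hv'] at h2
      simp only [Rat.cast_zero, zero_mul, add_zero] at h2
      push_cast
      exact_mod_cast h2

/-! ### Integers of the biquadratic field -/

/-- The coordinates of an integer of `K` along `√m` and `√r` are halves of integers of the same
parity. -/
theorem half_integer_coords (g p q : ℕ) (hg : g ≠ 0) (hm : p * g % 4 = 2) (hn : q * g % 4 = 3)
    (hr : p * q % 4 = 2) (sm : Squarefree (p * g)) (sn : Squarefree (q * g))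
    (sr : Squarefree (p * q)) (u v w : ℝ) (h1 : u ^ 2 = p * g) (h2 : v ^ 2 = q * g)
    (h3 : w * g = u * v) (a b c d : ℚ) (h : IsIntegral ℤ (a + b * u + c * v + d * w : ℝ)) :
    ∃ B D : ℤ, 2 * b = B ∧ 2 * d = D ∧ Even (B + D) := by
  obtain ⟨e1, -, e3⟩ := biquad_rels g p q hg u v w h1 h2 h3
  -- a monic integral polynomial vanishing at `x` vanishes at all conjugates of `x`
  have conj : ∀ u' v' w' : ℝ, u' ^ 2 = p * g → v' ^ 2 = q * g → w' * g = u' * v' →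
      IsIntegral ℤ (a + b * u' + c * v' + d * w' : ℝ) := by
    intro u' v' w' h1' h2' h3'
    obtain ⟨P, hP, hP0⟩ := h
    obtain ⟨A, B, C, D, hABCD⟩ := aeval_conj g p q hg a b c d P
    refine ⟨P, hP, ?_⟩
    have h0 := hABCD u v w h1 h2 h3
    rw [aeval_def, hP0] at h0
    obtain ⟨rfl, rfl, rfl, rfl⟩ := biquad_indep g p q hg hm hn hr u v w h1 h2 h3 A B C D h0.symm
    simpa [aeval_def] using hABCD u' v' w' h1' h2' h3'
  have c1 := conj u (-v) (-w) h1 (by simpa using h2) (by linear_combination -h3)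
  have c2 := conj (-u) v (-w) (by simpa using h1) h2 (by linear_combination -h3)
  have c3 := conj (-u) (-v) w (by simpa using h1) (by simpa using h2) (by linear_combination h3)
  obtain ⟨⟨A, hA⟩, B, hB⟩ := quad_int (p * g) sm (Or.inl hm) u (by push_cast; exact h1) (2 * a)
    (2 * b) (by refine integral_of_eq (h.add c1) ?_; push_cast; ring)
    (by refine integral_of_eq (c2.add c3) ?_; push_cast; ring)
  obtain ⟨-, C, hC⟩ := quad_int (q * g) sn (Or.inr hn) v (by push_cast; exact h2) (2 * a)
    (2 * c) (by refine integral_of_eq (h.add c2) ?_; push_cast; ring)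
    (by refine integral_of_eq (c1.add c3) ?_; push_cast; ring)
  obtain ⟨-, D, hD⟩ := quad_int (p * q) sr (Or.inl hr) w (by push_cast; exact e3) (2 * a)
    (2 * d) (by refine integral_of_eq (h.add c3) ?_; push_cast; ring)
    (by refine integral_of_eq (c1.add c2) ?_; push_cast; ring)
  -- the relative norm to `ℚ(√n)` is an integer of `ℚ(√n)`
  obtain ⟨⟨k, hk⟩, -⟩ := quad_int (q * g) sn (Or.inr hn) v (by push_cast; exact h2)
    (a ^ 2 + c ^ 2 * (q * g) - b ^ 2 * (p * g) - d ^ 2 * (p * q)) (2 * a * c - 2 * b * d * p)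
    (by
      refine integral_of_eq (h.mul c2) ?_
      push_cast
      linear_combination b ^ 2 * h1 - c ^ 2 * h2 + d ^ 2 * e3 + 2 * b * d * e1)
    (by
      refine integral_of_eq (c1.mul c3) ?_
      push_cast
      linear_combination b ^ 2 * h1 - c ^ 2 * h2 + d ^ 2 * e3 - 2 * b * d * e1)
  refine ⟨B, D, hB, hD, ?_⟩
  have key : A ^ 2 + C ^ 2 * ↑(q * g) - B ^ 2 * ↑(p * g) - D ^ 2 * ↑(p * q) = 4 * k := by
    have : (A ^ 2 + C ^ 2 * (q * g) - B ^ 2 * (p * g) - D ^ 2 * (p * q) : ℚ) = 4 * k := by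
      rw [← hk, ← hA, ← hB, ← hC, ← hD]; ring
    exact_mod_cast this
  generalize p * g = m at *
  generalize q * g = n at *
  generalize p * q = r at *
  obtain ⟨m', rfl⟩ : ∃ t, m = 4 * t + 2 := ⟨m / 4, by omega⟩
  obtain ⟨n', rfl⟩ : ∃ t, n = 4 * t + 3 := ⟨n / 4, by omega⟩
  obtain ⟨r', rfl⟩ : ∃ t, r = 4 * t + 2 := ⟨r / 4, by omega⟩
  push_cast at key
  clear * - key
  by_contra hodd
  rw [Int.not_even_iff_odd] at hodd
  obtain ⟨j, hj⟩ := hodd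
  obtain rfl : D = 2 * j + 1 - B := by linarith
  rcases Int.even_or_odd' A with ⟨A, rfl | rfl⟩ <;> rcases Int.even_or_odd' C with ⟨C, rfl | rfl⟩ <;>
    rcases Int.even_or_odd' B with ⟨B, rfl | rfl⟩ <;> ring_nf at key <;> omega

/-! ### The element `⌊√m⌋ + 1 + √m` -/

theorem half_bound (B D : ℤ) (h : Even (B + D)) (hne : ¬(B = 0 ∧ D = 0)) : 2 ≤ B ^ 2 + D ^ 2 := by
  obtain ⟨k, hk⟩ := h
  by_contra hlt
  have hB : B ^ 2 ≤ 1 := by nlinarith [sq_nonneg D]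
  have hD : D ^ 2 ≤ 1 := by nlinarith [sq_nonneg B]
  have hB' := abs_le.1 (sq_le_one_iff_abs_le_one B |>.1 hB)
  have hD' := abs_le.1 (sq_le_one_iff_abs_le_one D |>.1 hD)
  obtain ⟨hB1, hB2⟩ := hB'
  obtain ⟨hD1, hD2⟩ := hD'
  interval_cases B <;> interval_cases D <;> omega

/-- The result under the extra assumption `m ≤ r`, where `m = pg`, `n = qg`, `r = pq`. -/
theorem exists_not_sumSq_of_le (g p q s : ℕ) (hs : 0 < s) (hm : p * g % 4 = 2) (hn : q * g % 4 = 3)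
    (hr : p * q % 4 = 2) (sm : Squarefree (p * g)) (sn : Squarefree (q * g))
    (sr : Squarefree (p * q)) (hle : p * g ≤ p * q)
    (hbig : (2 * (s : ℝ) + 4) ^ 2 ≤ ((p * g : ℕ) : ℝ)) :
    ∃ α : ℝ, MemOK (p * g) (q * g) α ∧ IsTotPos (p * g) (q * g) α ∧
      ¬ IsSumSqOK (p * g) (q * g) ((s : ℝ) * α) := by
  have hg : g ≠ 0 := by rintro rfl; simp at hm
  have hg' : (g : ℝ) ≠ 0 := by exact_mod_cast hg
  obtain ⟨u, hu⟩ : ∃ u, u = √((p * g : ℕ) : ℝ) := ⟨_, rfl⟩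
  obtain ⟨v, hv⟩ : ∃ v, v = √((q * g : ℕ) : ℝ) := ⟨_, rfl⟩
  have hu0 : 0 ≤ u := hu ▸ Real.sqrt_nonneg _
  have h1 : u ^ 2 = p * g := by rw [hu, Real.sq_sqrt (by positivity)]; push_cast; rfl
  have h2 : v ^ 2 = q * g := by rw [hv, Real.sq_sqrt (by positivity)]; push_cast; rfl
  obtain ⟨w, h3⟩ : ∃ w : ℝ, w * g = u * v := ⟨u * v / g, by field_simp⟩
  have hubig : 2 * (s : ℝ) + 4 ≤ u := hu ▸ Real.le_sqrt_of_sq_le hbig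
  have hs1 : (1 : ℝ) ≤ s := by exact_mod_cast hs
  have huK : u ∈ Kbq (p * g) (q * g) :=
    IntermediateField.subset_adjoin _ _ (by simp [hu])
  obtain ⟨k, hk1, hk2⟩ : ∃ k : ℕ, u < k ∧ (k : ℝ) ≤ u + 1 :=
    ⟨⌊u⌋₊ + 1, by exact_mod_cast Nat.lt_floor_add_one u, by
      have := Nat.floor_le hu0; push_cast; linarith⟩
  have hmem : (k : ℝ) + u ∈ Kbq (p * g) (q * g) := add_mem (natCast_mem _ k) huK
  refine ⟨k + u, ⟨hmem, ?_⟩, ⟨hmem, fun σ => ?_⟩, ?_⟩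
  · refine IsIntegral.add (isIntegral_algebraMap (R := ℤ) (x := (k : ℤ)) |> fun h => by simpa using h) ?_
    refine IsIntegral.of_pow (n := 2) (by norm_num) ?_
    rw [h1]
    exact_mod_cast isIntegral_algebraMap (R := ℤ) (A := ℝ) (x := ((p * g : ℕ) : ℤ))
  · have hsplit : (⟨k + u, hmem⟩ : Kbq (p * g) (q * g)) = (k : Kbq (p * g) (q * g)) + ⟨u, huK⟩ := by
      ext; simp
    have hsq : (⟨u, huK⟩ : Kbq (p * g) (q * g)) ^ 2 = ((p * g : ℕ) : Kbq (p * g) (q * g)) := by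
      ext; push_cast; exact h1
    have hσ : σ ⟨u, huK⟩ ^ 2 = u ^ 2 := by
      rw [← map_pow, hsq, map_natCast, h1]; push_cast; rfl
    rw [hsplit, map_add, map_natCast]
    have := (abs_le.1 (sq_le_sq.1 hσ.le |>.trans (abs_of_nonneg hu0).le)).1
    linarith
  · rintro ⟨t, x, hx, hsum⟩
    have hrep : ∀ i, ∃ a b c d : ℚ, x i = a + b * u + c * v + d * w ∧
        ∃ B D : ℤ, 2 * b = B ∧ 2 * d = D ∧ Even (B + D) := by
      intro i
      obtain ⟨a, b, c, d, he⟩ := exists_coords_s19 g p q hg u v w h1 h2 h3 (x i) (by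
        have := (hx i).1
        rwa [Kbq, ← hu, ← hv] at this)
      exact ⟨a, b, c, d, he, half_integer_coords g p q hg hm hn hr sm sn sr u v w h1 h2 h3 a b c d
        (he ▸ (hx i).2)⟩
    choose a b c d he B D hB hD hev using hrep
    -- `P` and `Q` are the rational part and the coefficient of `u` in `x i ^ 2`
    obtain ⟨P, hPdef⟩ : ∃ P : Fin t → ℚ, ∀ i, P i = a i * a i + b i * b i * (p * g) +
      c i * c i * (q * g) + d i * d i * (p * q) := ⟨_, fun _ => rfl⟩
    obtain ⟨Q, hQdef⟩ : ∃ Q : Fin t → ℚ, ∀ i, Q i = a i * b i + b i * a i + c i * d i * q +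
      d i * c i * q := ⟨_, fun _ => rfl⟩
    obtain ⟨R, S, hsq⟩ : ∃ R S : Fin t → ℚ, ∀ i, x i ^ 2 = P i + Q i * u + R i * v + S i * w :=
      ⟨_, _, fun i => by
        rw [he i, sq, biquad_mul g p q hg u v w h1 h2 h3, ← hPdef, ← hQdef]⟩
    rw [Finset.sum_congr rfl fun i _ => hsq i] at hsum
    simp only [Finset.sum_add_distrib, ← Finset.sum_mul, ← Rat.cast_sum] at hsum
    obtain ⟨hP, hQ, -, -⟩ := biquad_indep g p q hg hm hn hr u v w h1 h2 h3 (∑ i, P i - s * k)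
      (∑ i, Q i - s) (∑ i, R i) (∑ i, S i) (by
        push_cast at hsum ⊢
        linear_combination -hsum)
    rw [sub_eq_zero] at hP hQ
    obtain ⟨i, hi⟩ : ∃ i, ¬(B i = 0 ∧ D i = 0) := by
      by_contra! hall
      have hs0 : (s : ℚ) = 0 := by
        rw [← hQ]
        refine Finset.sum_eq_zero fun i _ => ?_
        have hb : b i = 0 := by simpa [hall i] using hB i
        have hd : d i = 0 := by simpa [hall i] using hD i
        simp [hQdef, hb, hd]
      exact hs.ne' (by exact_mod_cast hs0)
    have hBD : (2 : ℚ) ≤ B i ^ 2 + D i ^ 2 := by exact_mod_cast half_bound _ _ (hev i) hi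
    rw [← hB, ← hD] at hBD
    have hle' : (p * g : ℚ) ≤ p * q := by exact_mod_cast hle
    have hPi : P i ≤ ∑ j, P j := Finset.single_le_sum (fun j _ => by
      have h1 := mul_self_nonneg (a j)
      have h2 := mul_self_nonneg (b j)
      have h3 := mul_self_nonneg (c j)
      have h4 := mul_self_nonneg (d j)
      rw [hPdef]
      positivity) (Finset.mem_univ i)
    have hlow : (p * g : ℚ) / 2 ≤ P i := by
      rw [hPdef]
      have e1 := mul_self_nonneg (a i)
      have e2 : 0 ≤ c i * c i * (q * g) := by have := mul_self_nonneg (c i); positivity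
      have e3 := mul_le_mul_of_nonneg_left hle' (mul_self_nonneg (d i))
      have e4 : (0 : ℚ) ≤ p * g := by positivity
      nlinarith
    have hfin : (p * g : ℚ) / 2 ≤ s * k := hlow.trans (hPi.trans hP.le)
    have hfin' : (p * g : ℝ) / 2 ≤ s * k := by
      have := (Rat.cast_le (K := ℝ)).2 hfin
      push_cast at this
      exact this
    rw [← h1] at hfin'
    nlinarith

/-- `ℚ(√m, √n) ⊆ ℚ(√r, √n)` for `m = pg`, `n = qg`, `r = pq`. -/
theorem Kbq_swap (g p q : ℕ) (hg : g ≠ 0) (hq : q ≠ 0) :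
    Kbq (p * g) (q * g) ≤ Kbq (p * q) (g * q) := by
  rw [Kbq, IntermediateField.adjoin_le_iff]
  have hn : √((q * g : ℕ) : ℝ) ∈ Kbq (p * q) (g * q) :=
    IntermediateField.subset_adjoin _ _ (by simp [mul_comm])
  have hr : √((p * q : ℕ) : ℝ) ∈ Kbq (p * q) (g * q) :=
    IntermediateField.subset_adjoin _ _ (by simp)
  rintro x (rfl | rfl)
  · have : √((p * g : ℕ) : ℝ) = √((p * q : ℕ) : ℝ) * √((q * g : ℕ) : ℝ) / (q : ℕ) := by
      rw [eq_div_iff (by exact_mod_cast hq)]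
      push_cast
      rw [← Real.sqrt_mul (by positivity), show (p * q * (q * g) : ℝ) = (p * g) * q ^ 2 by ring,
        Real.sqrt_mul (x := (p * g : ℝ)) (by positivity), Real.sqrt_sq (by positivity)]
    rw [this]
    exact div_mem (mul_mem hr hn) (natCast_mem _ q)
  · exact hn

/-- **Corollary (1).** If `m ≡ 2 (mod 4)`, `n ≡ 3 (mod 4)`, `m, r ≥ (2s₀+4)²` and
`n ≥ (s₀/2 + 4)²`, then not all elements of `s₀𝒪_K⁺` are sums of squares in `𝒪_K`. -/
theorem not_all_sums_of_squares_of_large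
    (m n r s₀ : ℕ) (hm : 1 < m) (hn : 1 < n) (hmn : m ≠ n)
    (hsm : Squarefree m) (hsn : Squarefree n)
    (hr : r = m * n / Nat.gcd m n ^ 2) (hs₀ : 0 < s₀)
    (hm4 : m % 4 = 2) (hn4 : n % 4 = 3)
    (hmbig : (2 * (s₀ : ℝ) + 4) ^ 2 ≤ (m : ℝ))
    (hrbig : (2 * (s₀ : ℝ) + 4) ^ 2 ≤ (r : ℝ))
    (hnbig : ((s₀ : ℝ) / 2 + 4) ^ 2 ≤ (n : ℝ)) :
    ∃ α : ℝ, MemOK m n α ∧ IsTotPos m n α ∧ ¬ IsSumSqOK m n ((s₀ : ℝ) * α) := by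
  
  set g := Nat.gcd m n with hgdef
  have hg : 0 < g := Nat.gcd_pos_of_pos_left _ (by omega)
  obtain ⟨p, hp⟩ : g ∣ m := Nat.gcd_dvd_left m n
  obtain ⟨q, hq⟩ : g ∣ n := Nat.gcd_dvd_right m n
  have hpq : Nat.Coprime p q := by
    have := Nat.coprime_div_gcd_div_gcd (m := m) (n := n) hg
    rwa [← hgdef, Nat.div_eq_of_eq_mul_right hg hp, Nat.div_eq_of_eq_mul_right hg hq] at this
  have hr' : r = p * q := by
    rw [hr]
    refine Nat.div_eq_of_eq_mul_right (by positivity) ?_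
    nth_rw 1 [hp, hq]
    ring
  clear_value g
  rw [mul_comm] at hp hq
  subst hp hq hr'
  have sr : Squarefree (p * q) :=
    (Nat.squarefree_mul hpq).2 ⟨hsm.of_mul_left, hsn.of_mul_left⟩
  have hr4 : p * q % 4 = 2 := by
    have hgq : q * g % 4 = 3 := hn4
    have hpg : p * g % 4 = 2 := hm4
    clear * - hgq hpg
    rw [Nat.mul_mod] at hgq hpg ⊢
    have h1 := Nat.mod_lt p (show 0 < 4 by norm_num)
    have h2 := Nat.mod_lt q (show 0 < 4 by norm_num)
    have h3 := Nat.mod_lt g (show 0 < 4 by norm_num)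
    generalize p % 4 = P at *
    generalize q % 4 = Q at *
    generalize g % 4 = G at *
    interval_cases P <;> interval_cases Q <;> interval_cases G <;> simp_all
  rcases le_total (p * g) (p * q) with hle | hle
  · exact exists_not_sumSq_of_le g p q s₀ hs₀ hm4 hn4 hr4 hsm hsn sr hle hmbig
  -- for `r ≤ m`, exchange the roles of `m` and `r`, that is, of `g` and `q`
  · have hq0 : q ≠ 0 := by rintro rfl; simp at hn4
    have hK : Kbq (p * g) (q * g) = Kbq (p * q) (g * q) :=
      le_antisymm (Kbq_swap g p q hg.ne' hq0) (Kbq_swap q p g hq0 hg.ne')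
    have := exists_not_sumSq_of_le q p g s₀ hs₀ hr4 (by rwa [mul_comm]) hm4 sr (by rwa [mul_comm]) hsm hle hrbig
    simp only [MemOK, IsTotPos, IsSumSqOK] at this ⊢
    rw [hK]
    exact this
end
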